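/- arXiv:2412.06123 — 9 statements merged into one kernel-verified Lean document; each statement's English description precedes it below -/
import Mathlib

section
/- Let F be a field and A a finite-dimensional associative unital F-algebra. Then l(A) ≤ max{m(A) − 1, (dim_F A)/2}; precisely, for every generating set S of A, either l(S) ≤ m(A) − 1 or 2·l(S) ≤ dim_F A. -/
/-!
Write `V = span ({1} ∪ S)` and `l = lenS F S`. The chain `V ^ 0 < V ^ 1 < ⋯ < V ^ l` is strict,
since a repetition would make `V ^ k` a subspace stable under `S` and containing `1`, hence
everything. If every step `V ^ k < V ^ (k + 1)` with `k + 1 < l` raises the dimension by at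
least two, then `dim A ≥ 1 + 2 (l - 1) + 1 = 2 l`.

Otherwise some `V ^ (n + 1) / V ^ n` with `n + 1 < l` is a line. Choose `t ∈ V` for which
`t * V ^ (n + 1)` is not contained in `V ^ (n + 1)`. Multiplication by `t` is then injective from
that line to `V ^ (n + 2) / V ^ (n + 1)`, and prepending a factor `t` while dropping the last
factor of a product shows, step by step, that `t ^ (n + 1) ∉ V ^ n` (`pow_notMem`). So the
line is spanned by `t ^ (n + 1)`, which propagates upwards: `V ^ j = V ^ (j - 1) + F t ^ j` for all
`j > n` (`pow_le_sup_span`). In particular `t ^ l ∉ V ^ (l - 1)`, so the minimal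
polynomial of `t` has degree at least `l + 1` (`le_natDegree_minpoly`).
-/

/-- `Lk F S k` is the `F`-linear span of all products of at most `k` elements of `S`
(the empty product `1` has length `0`); equivalently `V ^ k` with `V = span F ({1} ∪ S)`. -/
noncomputable def Lk (F : Type*) [Field F] {A : Type*} [Ring A] [Algebra F A]
    (S : Set A) (k : ℕ) : Submodule F A :=
  (Submodule.span F ({1} ∪ S)) ^ k

/-- The length of a generating set `S`: the least `k` with `Lk F S k = ⊤`. -/
noncomputable def lenS (F : Type*) [Field F] {A : Type*} [Ring A] [Algebra F A]
    (S : Set A) : ℕ :=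
  sInf {k | Lk F S k = ⊤}

/-- `mAlg F A` is the maximal degree over all `τ ∈ A` of the minimal polynomial of `τ`. -/
noncomputable def mAlg (F A : Type*) [Field F] [Ring A] [Algebra F A] : ℕ :=
  sSup {d | ∃ τ : A, d = (minpoly F τ).natDegree}

section Chain

variable {F A : Type*} [Field F] [Ring A] [Algebra F A] {V : Submodule F A}

lemma pow_le_pow_succ_of_one_le (h1 : (1 : A) ∈ V) (k : ℕ) : V ^ k ≤ V ^ (k + 1) := by
  intro x hx
  rw [pow_succ]
  simpa using Submodule.mul_mem_mul hx h1

/-- A repetition in the chain of powers of `V` forces the repeated term to be the whole algebra. -/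
lemma pow_eq_top_of_succ_le {S : Set A} (hS : Algebra.adjoin F S = ⊤) (hSV : S ⊆ V)
    (h1 : (1 : A) ∈ V) {k : ℕ} (h : V ^ (k + 1) ≤ V ^ k) : V ^ k = ⊤ := by
  have hone : (1 : A) ∈ V ^ k := by simpa using Submodule.pow_mem_pow V h1 k
  have hcl : ∀ x ∈ Submonoid.closure S, x ∈ V ^ k := by
    intro x hx
    induction hx using Submonoid.closure_induction_right with
    | one => exact hone
    | mul_right x _ y hy ih =>
      apply h
      rw [pow_succ]
      exact Submodule.mul_mem_mul ih (hSV hy)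
  have h2 : Subalgebra.toSubmodule (Algebra.adjoin F S) ≤ V ^ k := by
    rw [Algebra.adjoin_eq_span]
    exact Submodule.span_le.2 hcl
  rw [hS, Algebra.top_toSubmodule] at h2
  exact top_le_iff.1 h2

/-- If `V ^ (n + 1) / V ^ n` is a line and `V ^ (n + 2)` is strictly larger than `V ^ (n + 1)`, then
the line is spanned by the class of a power of some `t ∈ V`. -/
lemma pow_notMem {n : ℕ}
    (hline : ∀ u ∈ V ^ (n + 1), u ∉ V ^ n → V ^ (n + 1) ≤ V ^ n ⊔ Submodule.span F {u})
    (h₀ : ¬ V ^ (n + 1) ≤ V ^ n) (h : ¬ V ^ (n + 2) ≤ V ^ (n + 1)) :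
    ∃ t ∈ V, t ^ (n + 1) ∉ V ^ n := by
  obtain ⟨t, ht, v, hv, htv⟩ : ∃ t ∈ V, ∃ v ∈ V ^ (n + 1), t * v ∉ V ^ (n + 1) := by
    by_contra! hcon
    apply h
    rw [pow_succ' V (n + 1)]
    exact Submodule.mul_le.2 hcon
  -- Multiplication by `t` is injective on the line `V ^ (n + 1) / V ^ n`.
  have hinj : ∀ u ∈ V ^ (n + 1), u ∉ V ^ n → t * u ∉ V ^ (n + 1) := by
    intro u hu hun htu
    apply htv
    obtain ⟨a, ha, b, hb, rfl⟩ := Submodule.mem_sup.1 (hline u hu hun hv)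
    obtain ⟨c, rfl⟩ := Submodule.mem_span_singleton.1 hb
    rw [mul_add, mul_smul_comm]
    refine add_mem ?_ (Submodule.smul_mem _ _ htu)
    rw [pow_succ' V n]
    exact Submodule.mul_mem_mul ht ha
  have key : ∀ j i, j + i = n + 1 → ∃ u ∈ V ^ i, t ^ j * u ∉ V ^ n := by
    intro j
    induction j with
    | zero =>
      intro i hi
      obtain rfl : i = n + 1 := by omega
      obtain ⟨u, hu, hun⟩ := Set.not_subset.1 h₀
      exact ⟨u, hu, by simpa using hun⟩
    | succ j ih =>
      intro i hi
      obtain ⟨u, hu, hun⟩ := ih (i + 1) (by omega)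
      have hmem : t ^ j * u ∈ V ^ (n + 1) := by
        rw [show n + 1 = j + (i + 1) by omega, pow_add V]
        exact Submodule.mul_mem_mul (Submodule.pow_mem_pow V ht j) hu
      have hout := hinj _ hmem hun
      rw [← mul_assoc, ← pow_succ'] at hout
      by_contra! hcon
      apply hout
      have hle : V ^ i * V ≤ (V ^ (n + 1)).comap (LinearMap.mulLeft F (t ^ (j + 1))) := by
        rw [Submodule.mul_le]
        intro a ha b hb
        rw [Submodule.mem_comap, LinearMap.mulLeft_apply, ← mul_assoc, pow_succ V n]
        exact Submodule.mul_mem_mul (hcon a ha) hb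
      rw [pow_succ] at hu
      exact hle hu
  obtain ⟨u, hu, hun⟩ := key (n + 1) 0 rfl
  refine ⟨t, ht, fun hmem => hun ?_⟩
  rw [pow_zero, Submodule.mem_one] at hu
  obtain ⟨c, rfl⟩ := hu
  rw [← Algebra.commutes, ← Algebra.smul_def]
  exact Submodule.smul_mem _ _ hmem

/-- Once a power of `t` spans one successive quotient of the chain, its powers span all later
ones. -/
lemma pow_le_sup_span {n : ℕ} {t : A} (ht : t ∈ V)
    (h : V ^ (n + 1) ≤ V ^ n ⊔ Submodule.span F {t ^ (n + 1)}) (j : ℕ) :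
    V ^ (n + j + 1) ≤ V ^ (n + j) ⊔ Submodule.span F {t ^ (n + j + 1)} := by
  induction j with
  | zero => exact h
  | succ j ih =>
    rw [← add_assoc]
    set k := n + j
    rw [pow_succ V (k + 1), Submodule.mul_le]
    intro a ha v hv
    obtain ⟨b, hb, c, hc, rfl⟩ := Submodule.mem_sup.1 (ih ha)
    obtain ⟨r, rfl⟩ := Submodule.mem_span_singleton.1 hc
    rw [add_mul, smul_mul_assoc]
    refine add_mem (Submodule.mem_sup_left ?_) (Submodule.smul_mem _ _ ?_)
    · rw [pow_succ V k]
      exact Submodule.mul_mem_mul hb hv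
    -- `t ^ (k + 1) * v = t * (t ^ k * v)`, and the inductive hypothesis applies to `t ^ k * v`.
    have hw : t ^ k * v ∈ V ^ (k + 1) := by
      rw [pow_succ V k]
      exact Submodule.mul_mem_mul (Submodule.pow_mem_pow V ht k) hv
    obtain ⟨b', hb', c', hc', heq⟩ := Submodule.mem_sup.1 (ih hw)
    obtain ⟨r', rfl⟩ := Submodule.mem_span_singleton.1 hc'
    rw [pow_succ' t k, mul_assoc, ← heq, mul_add, mul_smul_comm, ← pow_succ']
    refine add_mem (Submodule.mem_sup_left ?_) (Submodule.mem_sup_right ?_)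
    · rw [pow_succ' V k]
      exact Submodule.mul_mem_mul ht hb'
    · exact Submodule.smul_mem _ _ (Submodule.mem_span_singleton_self _)

lemma le_natDegree_minpoly [FiniteDimensional F A] (h1 : (1 : A) ∈ V) {t : A} (ht : t ∈ V)
    {k : ℕ} (h : t ^ (k + 1) ∉ V ^ k) : k + 2 ≤ (minpoly F t).natDegree := by
  by_contra! hlt
  apply h
  have hint : IsIntegral F t := Algebra.IsIntegral.isIntegral t
  have hmono : Monotone fun i => V ^ i :=
    monotone_nat_of_le_succ (pow_le_pow_succ_of_one_le h1)
  have hq : Polynomial.aeval t ((Polynomial.X ^ (k + 1) : Polynomial F) %ₘ minpoly F t)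
      = t ^ (k + 1) := by
    rw [Polynomial.aeval_modByMonic_eq_self_of_root (minpoly.aeval F t)]
    simp
  rw [← hq, Polynomial.aeval_eq_sum_range]
  refine sum_mem fun i hi => Submodule.smul_mem _ _ ?_
  have hdeg : i < k + 1 := by
    have : Nontrivial A := by
      by_contra hA
      rw [not_nontrivial_iff_subsingleton] at hA
      exact h (by rw [Subsingleton.elim (t ^ (k + 1)) 0]; exact zero_mem _)
    have := Polynomial.natDegree_modByMonic_lt (Polynomial.X ^ (k + 1) : Polynomial F)
      (minpoly.monic hint) (minpoly.ne_one F t)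
    rw [Finset.mem_range] at hi
    omega
  exact hmono (Nat.lt_succ_iff.1 hdeg) (Submodule.pow_mem_pow V ht i)

lemma le_sup_span_of_finrank_le [FiniteDimensional F A] {W U : Submodule F A} (hWU : W ≤ U)
    (hd : Module.finrank F U ≤ Module.finrank F W + 1) {u : A} (hu : u ∈ U) (huW : u ∉ W) :
    U ≤ W ⊔ Submodule.span F {u} := by
  have hle : W ⊔ Submodule.span F {u} ≤ U :=
    sup_le hWU ((Submodule.span_singleton_le_iff_mem _ _).2 hu)
  have hlt : W < W ⊔ Submodule.span F {u} :=
    lt_of_le_of_ne le_sup_left fun heq =>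
      huW (heq ▸ Submodule.mem_sup_right (Submodule.mem_span_singleton_self u))
  have := Submodule.finrank_lt_finrank_of_lt hlt
  exact (Submodule.eq_of_le_of_finrank_le hle (by omega)).ge

end Chain

theorem stmt_0 (F A : Type*) [Field F] [Ring A] [Algebra F A] [FiniteDimensional F A]
    (S : Set A) (hS : Algebra.adjoin F S = ⊤) :
    lenS F S ≤ mAlg F A - 1 ∨ 2 * lenS F S ≤ Module.finrank F A := by
  obtain hl | ⟨l, hl⟩ : lenS F S = 0 ∨ ∃ l, lenS F S = l + 1 :=
    (Nat.eq_zero_or_eq_succ_pred _).imp id fun h => ⟨_, h⟩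
  · simp [hl]
  rw [hl]
  set V := Submodule.span F ({1} ∪ S) with hV
  have h1 : (1 : A) ∈ V := Submodule.subset_span (by simp)
  have hSV : S ⊆ V := fun x hx => Submodule.subset_span (Or.inr hx)
  have hmono := pow_le_pow_succ_of_one_le h1
  have hstrict : ∀ k ≤ l, ¬ V ^ (k + 1) ≤ V ^ k := by
    intro k hk hle
    have hnot : k ∉ {k | Lk F S k = ⊤} := Nat.notMem_of_lt_sInf (show k < lenS F S by omega)
    exact hnot (pow_eq_top_of_succ_le hS hSV h1 hle)
  have hrank : ∀ k ≤ l, Module.finrank F ↥(V ^ k) + 1 ≤ Module.finrank F ↥(V ^ (k + 1)) :=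
    fun k hk => Submodule.finrank_lt_finrank_of_lt (lt_of_le_not_ge (hmono k) (hstrict k hk))
  by_cases hcase : ∃ n < l, Module.finrank F ↥(V ^ (n + 1)) ≤ Module.finrank F ↥(V ^ n) + 1
  · left
    obtain ⟨n, hn, hd⟩ := hcase
    have hline := fun u hu hun => le_sup_span_of_finrank_le (u := u) (hmono n) hd hu hun
    obtain ⟨t, ht, htn⟩ := pow_notMem hline (hstrict n hn.le) (hstrict (n + 1) hn)
    have hup := pow_le_sup_span ht
      (hline _ (Submodule.pow_mem_pow V ht _) htn) (l - n)
    rw [show n + (l - n) = l by omega] at hup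
    have htl : t ^ (l + 1) ∉ V ^ l := fun hmem =>
      hstrict l le_rfl (hup.trans (sup_le le_rfl
        ((Submodule.span_singleton_le_iff_mem _ _).2 hmem)))
    have hdeg := le_natDegree_minpoly h1 ht htl
    have hm : (minpoly F t).natDegree ≤ mAlg F A :=
      le_csSup ⟨Module.finrank F A, by rintro _ ⟨τ, rfl⟩; exact minpoly.natDegree_le τ⟩ ⟨t, rfl⟩
    omega
  · right
    push Not at hcase
    have hone : 1 ≤ Module.finrank F ↥(V ^ 0) := by
      have hA : Nontrivial A := by
        by_contra hA
        rw [not_nontrivial_iff_subsingleton] at hA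
        exact hstrict 0 (Nat.zero_le _) fun x _ => by
          rw [Subsingleton.elim x 0]; exact zero_mem _
      have hne : V ^ 0 ≠ ⊥ := fun hbot => one_ne_zero (α := A) <| by
        rw [← Submodule.mem_bot F, ← hbot, pow_zero]
        exact Submodule.one_le.1 le_rfl
      exact Submodule.one_le_finrank_iff.2 hne
    have hgrow : ∀ k ≤ l, 2 * k + 1 ≤ Module.finrank F ↥(V ^ k) := by
      intro k
      induction k with
      | zero => exact fun _ => hone
      | succ k ih =>
        intro hk
        have := ih (by omega)
        have := hcase k (by omega)
        omega
    have := hgrow l le_rfl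
    have := hrank l le_rfl
    have := Submodule.finrank_le (V ^ (l + 1))
    omega
end

section
/- Let F be a field, A a finite-dimensional associative unital F-algebra, and S a generating set of A with l(S) ≥ m(A). Then for every k with 1 ≤ k ≤ l(S) − 1 one has dim_F L_k(S) − dim_F L_{k−1}(S) ≥ 2; consequently dim_F A ≥ 2·l(S). -/
section Length

variable {F A : Type*} [Field F] [Ring A] [Algebra F A]

/-- Sliding the right factor: for `s ∈ V` the product `s * (u * a) = (s * u) * a` can be rewritten
using the hypothesis on `s * u ∈ V ^ (n + 1)`. -/
lemma step {V : Submodule F A} {n : ℕ} {u a : A} (hu : u ∈ V ^ n) (ha : a ∈ V)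
    (h : ∀ x ∈ V ^ (n + 1), ∃ c : F, x - c • (u * a) ∈ V ^ n) :
    ∀ x ∈ V ^ (n + 2), ∃ c : F, x - c • (u * a * a) ∈ V ^ (n + 1) := by
  intro x hx
  rw [show n + 2 = (n + 1) + 1 from rfl, pow_succ'] at hx
  induction hx using Submodule.mul_induction_on' with
  | mem_mul_mem s hs y hy =>
    obtain ⟨c, hc⟩ := h y hy
    have hsu : s * u ∈ V ^ (n + 1) := by
      rw [pow_succ']; exact Submodule.mul_mem_mul hs hu
    obtain ⟨d, hd⟩ := h _ hsu
    refine ⟨c * d, ?_⟩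
    have h1 : s * (y - c • (u * a)) ∈ V ^ (n + 1) := by
      rw [pow_succ']; exact Submodule.mul_mem_mul hs hc
    have h2 : (s * u - d • (u * a)) * a ∈ V ^ (n + 1) := by
      rw [pow_succ]; exact Submodule.mul_mem_mul hd ha
    have h3 := Submodule.add_mem _ h1 (Submodule.smul_mem _ c h2)
    convert h3 using 1
    simp only [mul_sub, sub_mul, smul_sub, mul_smul_comm, smul_mul_assoc, mul_smul, mul_assoc]
    abel
  | add x _ y _ hx hy =>
    obtain ⟨c, hc⟩ := hx
    obtain ⟨d, hd⟩ := hy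
    refine ⟨c + d, ?_⟩
    convert Submodule.add_mem _ hc hd using 1
    rw [add_smul]; abel

/-- If `V ^ (n + 1)` exceeds `V ^ n` by the single direction `u * a` and the chain still grows at
the next step, then a power of `a` can be taken as that direction. -/
lemma exists_pow_notMem {V : Submodule F A} {n : ℕ} {u a : A}
    (hu : u ∈ V ^ n) (ha : a ∈ V) (hua : u * a ∉ V ^ n)
    (h : ∀ x ∈ V ^ (n + 1), ∃ c : F, x - c • (u * a) ∈ V ^ n)
    (hlt : ¬ V ^ (n + 2) ≤ V ^ (n + 1)) : a ^ (n + 1) ∉ V ^ n := by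
  have huaa : u * a * a ∉ V ^ (n + 1) := by
    intro hmem
    apply hlt
    intro x hx
    obtain ⟨c, hc⟩ := step hu ha h x hx
    have := Submodule.add_mem _ hc (Submodule.smul_mem _ c hmem)
    simpa using this
  have key : ∀ j ≤ n, ∃ v ∈ V ^ (n - j), v * a ^ (j + 1) ∉ V ^ n := by
    intro j
    induction j with
    | zero => intro _; exact ⟨u, hu, by simpa using hua⟩
    | succ j ih =>
      intro hj
      obtain ⟨v, hv, hva⟩ := ih (by omega)
      have hmem : v * a ^ (j + 1) ∈ V ^ (n + 1) := by
        rw [show n + 1 = (n - j) + (j + 1) by omega, pow_add]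
        exact Submodule.mul_mem_mul hv (Submodule.pow_mem_pow _ ha _)
      obtain ⟨c, hc⟩ := h _ hmem
      have hc0 : c ≠ 0 := by
        rintro rfl
        exact hva (by simpa using hc)
      have hnot : v * a ^ (j + 2) ∉ V ^ (n + 1) := by
        intro hm
        apply huaa
        have h2 : (v * a ^ (j + 1) - c • (u * a)) * a ∈ V ^ (n + 1) := by
          rw [pow_succ V]; exact Submodule.mul_mem_mul hc ha
        have h3 := Submodule.smul_mem _ c⁻¹ (Submodule.sub_mem _ hm h2)
        convert h3 using 1
        rw [sub_mul, smul_mul_assoc, mul_assoc v, ← pow_succ, sub_sub_cancel, smul_smul,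
          inv_mul_cancel₀ hc0, one_smul]
      by_contra! hcon
      apply hnot
      rw [show n - j = (n - (j + 1)) + 1 by omega, pow_succ'] at hv
      clear hmem hc hva hnot
      induction hv using Submodule.mul_induction_on' with
      | mem_mul_mem s hs y hy =>
        rw [mul_assoc, pow_succ' V]
        exact Submodule.mul_mem_mul hs (hcon y hy)
      | add x _ y _ hx hy =>
        rw [add_mul]; exact Submodule.add_mem _ hx hy
  obtain ⟨v, hv, hva⟩ := key n le_rfl
  rw [Nat.sub_self, pow_zero, Submodule.mem_one] at hv
  obtain ⟨c, rfl⟩ := hv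
  intro hm
  apply hva
  rw [← Algebra.smul_def]
  exact Submodule.smul_mem _ c hm

lemma pow_mem_of_natDegree_le [Nontrivial A] [FiniteDimensional F A] {V : Submodule F A}
    (h1 : (1 : A) ∈ V) {a : A} (ha : a ∈ V) {n : ℕ}
    (hd : (minpoly F a).natDegree ≤ n + 1) : a ^ (n + 1) ∈ V ^ n := by
  have hint : IsIntegral F a := Algebra.IsIntegral.isIntegral a
  have hmon := minpoly.monic hint
  have hlt := Polynomial.natDegree_modByMonic_lt (Polynomial.X ^ (n + 1)) hmon (minpoly.ne_one F a)
  have heq : Polynomial.aeval a ((Polynomial.X ^ (n + 1)) %ₘ minpoly F a) = a ^ (n + 1) := by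
    rw [Polynomial.modByMonic_eq_sub_mul_div]
    simp [minpoly.aeval]
  rw [← heq, Polynomial.aeval_eq_sum_range' (lt_of_lt_of_le hlt hd)]
  refine Submodule.sum_mem _ fun i hi => Submodule.smul_mem _ _ ?_
  rw [Finset.mem_range] at hi
  exact pow_le_pow_right₀ (Submodule.one_le.2 h1) (by omega : i ≤ n)
    (Submodule.pow_mem_pow _ ha _)

lemma one_le_span (S : Set A) : (1 : A) ∈ Submodule.span F ({1} ∪ S) :=
  Submodule.subset_span (by simp)

lemma Lk_mono (S : Set A) : Monotone (Lk F S) := fun _ _ h =>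
  pow_le_pow_right₀ (Submodule.one_le.2 (one_le_span S)) h

lemma exists_mem_Lk {S : Set A} (hS : Algebra.adjoin F S = ⊤) (x : A) : ∃ n, x ∈ Lk F S n := by
  have hx : x ∈ Algebra.adjoin F S := hS ▸ Algebra.mem_top
  induction hx using Algebra.adjoin_induction with
  | mem x hx => exact ⟨1, by
      rw [Lk, pow_one]; exact Submodule.subset_span (Or.inr hx)⟩
  | algebraMap r => exact ⟨0, by
      rw [Lk, pow_zero]; exact Submodule.mem_one.2 ⟨r, rfl⟩⟩
  | add x y _ _ hx hy =>
    obtain ⟨n, hn⟩ := hx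
    obtain ⟨m, hm⟩ := hy
    exact ⟨max n m, Submodule.add_mem _ (Lk_mono S (le_max_left _ _) hn)
      (Lk_mono S (le_max_right _ _) hm)⟩
  | mul x y _ _ hx hy =>
    obtain ⟨n, hn⟩ := hx
    obtain ⟨m, hm⟩ := hy
    exact ⟨n + m, by rw [Lk, pow_add]; exact Submodule.mul_mem_mul hn hm⟩

/-- The length is attained: the infimum defining `lenS` is over a nonempty set. -/
lemma Lk_lenS [FiniteDimensional F A] {S : Set A} (hS : Algebra.adjoin F S = ⊤) :
    Lk F S (lenS F S) = ⊤ := by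
  have hne : {k | Lk F S k = ⊤}.Nonempty := by
    obtain ⟨n, hn⟩ := monotone_stabilizes_iff_noetherian.2
      (inferInstance : IsNoetherian F A) ⟨Lk F S, Lk_mono S⟩
    refine ⟨n, ?_⟩
    rw [Set.mem_ofPred_eq, eq_top_iff]
    intro x _
    obtain ⟨m, hm⟩ := exists_mem_Lk hS x
    have h1 : Lk F S n = Lk F S (max n m) := hn _ (le_max_left _ _)
    rw [h1]
    exact Lk_mono S (le_max_right _ _) hm
  exact Nat.sInf_mem hne

lemma not_Lk_succ_le [FiniteDimensional F A] {S : Set A} (hS : Algebra.adjoin F S = ⊤)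
    {k : ℕ} (hk : k < lenS F S) : ¬ Lk F S (k + 1) ≤ Lk F S k := by
  intro hle
  have hall : ∀ j, Lk F S (k + j) ≤ Lk F S k := by
    intro j
    induction j with
    | zero => exact le_rfl
    | succ j ih =>
      refine le_trans ?_ hle
      rw [← add_assoc]
      unfold Lk at *
      rw [pow_succ, pow_succ _ k]
      exact mul_le_mul' ih le_rfl
  have h1 := hall (lenS F S - k)
  rw [Nat.add_sub_cancel' hk.le, Lk_lenS hS, top_le_iff] at h1
  have hle' : lenS F S ≤ k := Nat.sInf_le h1
  omega

lemma natDegree_minpoly_le_mAlg [FiniteDimensional F A] (a : A) :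
    (minpoly F a).natDegree ≤ mAlg F A := by
  refine le_csSup ⟨Module.finrank F A, ?_⟩ ⟨a, rfl⟩
  rintro d ⟨τ, rfl⟩
  exact minpoly.natDegree_le τ

/-- In a subspace of relative dimension at most one, any vector outside the smaller space
spans the difference. -/
lemma exists_sub_smul_mem [FiniteDimensional F A] {P Q : Submodule F A} (hPQ : P ≤ Q)
    (hd : Module.finrank F Q ≤ Module.finrank F P + 1) {w : A} (hw : w ∈ Q) (hwP : w ∉ P) :
    ∀ x ∈ Q, ∃ c : F, x - c • w ∈ P := by
  have hlt : P < P ⊔ Submodule.span F {w} := by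
    refine lt_of_le_of_ne le_sup_left fun he => hwP ?_
    rw [he]
    exact Submodule.mem_sup_right (Submodule.mem_span_singleton_self w)
  have hle : P ⊔ Submodule.span F {w} ≤ Q :=
    sup_le hPQ ((Submodule.span_singleton_le_iff_mem _ _).2 hw)
  have heq : P ⊔ Submodule.span F {w} = Q :=
    Submodule.eq_of_le_of_finrank_le hle (by
      have := Submodule.finrank_lt_finrank_of_lt hlt
      omega)
  intro x hx
  rw [← heq, Submodule.mem_sup] at hx
  obtain ⟨y, hy, z, hz, rfl⟩ := hx
  obtain ⟨c, rfl⟩ := Submodule.mem_span_singleton.1 hz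
  exact ⟨c, by simpa using hy⟩

lemma finrank_Lk_add_two_le [FiniteDimensional F A] {S : Set A} (hS : Algebra.adjoin F S = ⊤)
    (h : mAlg F A ≤ lenS F S) {n : ℕ} (hn : n + 1 < lenS F S) :
    Module.finrank F (Lk F S n) + 2 ≤ Module.finrank F (Lk F S (n + 1)) := by
  by_contra! hcon
  have hlt := not_Lk_succ_le hS (show n < lenS F S by omega)
  have hlt2 := not_Lk_succ_le hS hn
  have hlast := not_Lk_succ_le hS (show lenS F S - 1 < lenS F S by omega)
  have hmono : Lk F S n ≤ Lk F S (n + 1) := Lk_mono S (Nat.le_succ n)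
  have hone := one_le_span (F := F) S
  unfold Lk at hcon hlt hlt2 hmono hlast
  set V := Submodule.span F ({1} ∪ S) with hV
  obtain ⟨u, hu, a, ha, hua⟩ : ∃ u ∈ V ^ n, ∃ a ∈ V, u * a ∉ V ^ n := by
    by_contra! hc
    apply hlt
    rw [pow_succ, Submodule.mul_le]
    exact hc
  have hspan := exists_sub_smul_mem hmono (by omega)
    (by rw [pow_succ]; exact Submodule.mul_mem_mul hu ha) hua
  have hpow := exists_pow_notMem hu ha hua hspan hlt2
  have hspan' := exists_sub_smul_mem hmono (by omega) (Submodule.pow_mem_pow _ ha _) hpow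
  have hall : ∀ j, ∀ x ∈ V ^ (n + j + 1), ∃ c : F, x - c • a ^ (n + j + 1) ∈ V ^ (n + j) := by
    intro j
    induction j with
    | zero => exact hspan'
    | succ j ih =>
      have h2 := step (u := a ^ (n + j)) (Submodule.pow_mem_pow _ ha _) ha
        (by simpa only [← pow_succ] using ih)
      simp only [← pow_succ] at h2
      exact h2
  have : Nontrivial A := by
    by_contra hn
    rw [not_nontrivial_iff_subsingleton] at hn
    exact hua (by rw [Subsingleton.elim (u * a) 0]; exact Submodule.zero_mem _)
  have hj := hall (lenS F S - 1 - n)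
  rw [show n + (lenS F S - 1 - n) = lenS F S - 1 by omega] at hj
  have hmem := pow_mem_of_natDegree_le hone ha (n := lenS F S - 1)
    ((natDegree_minpoly_le_mAlg a).trans (by omega))
  apply hlast
  intro x hx
  obtain ⟨c, hc⟩ := hj x hx
  simpa using Submodule.add_mem _ hc (Submodule.smul_mem _ c hmem)

end Length

theorem stmt_1 (F A : Type*) [Field F] [Ring A] [Algebra F A] [FiniteDimensional F A]
    (S : Set A) (hS : Algebra.adjoin F S = ⊤) (h : mAlg F A ≤ lenS F S) :
    (∀ k, 1 ≤ k → k ≤ lenS F S - 1 →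
      2 ≤ Module.finrank F (Lk F S k) - Module.finrank F (Lk F S (k - 1))) ∧
    2 * lenS F S ≤ Module.finrank F A := by
  refine ⟨?_, ?_⟩
  · intro k hk hk'
    obtain ⟨n, rfl⟩ : ∃ n, k = n + 1 := ⟨k - 1, by omega⟩
    have := finrank_Lk_add_two_le hS h (n := n) (by omega)
    rw [Nat.add_sub_cancel]
    omega
  · rcases Nat.eq_zero_or_pos (lenS F S) with h0 | hpos
    · simp [h0]
    have hlast := not_Lk_succ_le hS (show lenS F S - 1 < lenS F S by omega)
    have hne : Lk F S 0 ≠ ⊥ := by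
      -- If `1 = 0` then `A` is trivial, and the chain could not grow.
      intro hb
      apply hlast
      have h1 : (1 : A) ∈ Lk F S 0 := by
        rw [Lk, pow_zero]; exact Submodule.one_le.1 le_rfl
      rw [hb, Submodule.mem_bot] at h1
      intro x _
      rw [← mul_one x, h1, mul_zero]
      exact Submodule.zero_mem _
    have hgrow : ∀ n, n < lenS F S → 2 * n + 1 ≤ Module.finrank F (Lk F S n) := by
      intro n
      induction n with
      | zero =>
        intro _
        have := Submodule.one_le_finrank_iff.2 hne
        omega
      | succ n ih =>
        intro hn
        have h1 := ih (by omega)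
        have h2 := finrank_Lk_add_two_le hS h hn
        omega
    have h1 := hgrow (lenS F S - 1) (by omega)
    have h2 : Module.finrank F (Lk F S (lenS F S - 1)) < Module.finrank F A := by
      refine Submodule.finrank_lt fun ht => hlast ?_
      rw [ht]
      exact le_top
    omega
end

section
/- Let F be a field and n ≥ 3. The bicirculant algebra C_n(F), i.e., the unital F-subalgebra of M_n(F) generated by {A_n, B_n}, has dimension 2n − 2 over F if n is even, and dimension 2n − 1 if n is odd. -/
/-!
Index rows and columns by residues mod `n`. The algebra generated by `A_n` and `B_n` consists
exactly of the matrices with entries `f (j - i) + g (i + j)`, where `f` and `g` are arbitrary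
functions `ZMod n → F`: such matrices are closed under multiplication (`patternMap_mul`), and they
are spanned by the powers of `A_n` and their products with `B_n` (`range_le_adjoin`).

So the algebra is the range of a linear map `patternMap` from a space of dimension `2 * n`. A pair
`(f, g)` is in the kernel iff `g = -f` and `f` is invariant under translation by `2`, that is, iff
`f` factors through `ZMod d` with `d = gcd 2 n`. The kernel therefore has dimension `d`
(`finrank_ker`), and rank-nullity gives dimension `2 * n - d`.
-/

/-- The circulant permutation matrix `A_n` (ones in positions `(i, i+1)` cyclically). -/
def Acirc (n : ℕ) (F : Type*) [Field F] : Matrix (Fin n) (Fin n) F :=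
  Matrix.of fun i j => if (j : ℕ) = ((i : ℕ) + 1) % n then 1 else 0

/-- The anti-circulant permutation matrix `B_n` (ones in positions `(i, n+1-i)`,
i.e. `i + j = n - 1` in 0-indexed coordinates). -/
def Bcirc (n : ℕ) (F : Type*) [Field F] : Matrix (Fin n) (Fin n) F :=
  Matrix.of fun i j => if (i : ℕ) + (j : ℕ) = n - 1 then 1 else 0

/-- The linear map sending `(f, g)` to the matrix with entries `f (j - i) + g (i + j)`, where the
indices are read modulo `n`: a circulant matrix plus an anti-circulant one. -/
def patternMap (n : ℕ) (F : Type*) [Field F] :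
    ((ZMod n → F) × (ZMod n → F)) →ₗ[F] Matrix (Fin n) (Fin n) F where
  toFun p := Matrix.of fun i j =>
    p.1 (((j : ℕ) : ZMod n) - ((i : ℕ) : ZMod n)) + p.2 (((i : ℕ) : ZMod n) + ((j : ℕ) : ZMod n))
  map_add' p q := by
    ext i j
    simp only [Prod.fst_add, Prod.snd_add, Pi.add_apply, Matrix.of_apply, Matrix.add_apply]
    ring
  map_smul' c p := by
    ext i j
    simp only [Prod.smul_fst, Prod.smul_snd, Pi.smul_apply, Matrix.of_apply, Matrix.smul_apply,
      smul_eq_mul, RingHom.id_apply]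
    ring

section

variable {F : Type*} [Field F] {n : ℕ}

lemma patternMap_apply (f g : ZMod n → F) (i j : Fin n) :
    patternMap n F (f, g) i j =
      f (((j : ℕ) : ZMod n) - ((i : ℕ) : ZMod n)) +
        g (((i : ℕ) : ZMod n) + ((j : ℕ) : ZMod n)) := rfl

variable [NeZero n]

/-- Reduction modulo `n` as a bijection from `Fin n` to `ZMod n`. -/
def finZMod (n : ℕ) [NeZero n] : Fin n ≃ ZMod n where
  toFun i := ((i : ℕ) : ZMod n)
  invFun z := ⟨z.val, ZMod.val_lt z⟩
  left_inv i := Fin.ext (ZMod.val_cast_of_lt i.2)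
  right_inv z := ZMod.natCast_zmod_val z

lemma sum_fin_cast (G : ZMod n → F) : ∑ k : Fin n, G ((k : ℕ) : ZMod n) = ∑ z, G z :=
  (finZMod n).sum_comp G

lemma sum_fin_cast_add (G : ZMod n → F) (a : ZMod n) :
    ∑ k : Fin n, G ((k : ℕ) : ZMod n) = ∑ z, G (z + a) :=
  (sum_fin_cast G).trans (Fintype.sum_equiv (Equiv.addRight a) _ _ fun _ => rfl).symm

/-- The product of two matrices of the given pattern again has this pattern; its circulant and
anti-circulant parts are convolutions and correlations of the original ones. -/
lemma patternMap_mul (f g f' g' : ZMod n → F) :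
    patternMap n F (f, g) * patternMap n F (f', g') =
      patternMap n F
        (fun t => ∑ z, (f z * f' (t - z) + g z * g' (z + t)),
         fun t => ∑ z, (f z * g' (z + t) + g z * f' (t - z))) := by
  ext i j
  simp only [Matrix.mul_apply, patternMap_apply]
  set a : ZMod n := ((i : ℕ) : ZMod n)
  set b : ZMod n := ((j : ℕ) : ZMod n)
  have h1 := sum_fin_cast_add (fun k : ZMod n => f (k - a) * (f' (b - k) + g' (k + b))) a
  have h2 := sum_fin_cast_add (fun k : ZMod n => g (a + k) * (f' (b - k) + g' (k + b))) (-a)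
  simp only [add_mul, Finset.sum_add_distrib] at h1 h2 ⊢
  rw [h1, h2]
  simp only [mul_add, Finset.sum_add_distrib]
  have e1 : ∀ z : ZMod n, z + a - a = z := fun z => by ring
  have e2 : ∀ z : ZMod n, b - (z + a) = b - a - z := fun z => by ring
  have e3 : ∀ z : ZMod n, z + a + b = z + (a + b) := fun z => by ring
  have e4 : ∀ z : ZMod n, a + (z + -a) = z := fun z => by ring
  have e5 : ∀ z : ZMod n, b - (z + -a) = a + b - z := fun z => by ring
  have e6 : ∀ z : ZMod n, z + -a + b = z + (b - a) := fun z => by ring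
  simp only [e1, e2, e3, e4, e5, e6]
  ring

lemma acirc_eq : Acirc n F = patternMap n F (Pi.single 1 1, 0) := by
  ext i j
  have h : (j : ℕ) = ((i : ℕ) + 1) % n ↔
      ((j : ℕ) : ZMod n) - ((i : ℕ) : ZMod n) = 1 := by
    rw [sub_eq_iff_eq_add', ← Nat.cast_succ, ZMod.natCast_eq_natCast_iff', Nat.mod_eq_of_lt j.2]
  simp [Acirc, patternMap_apply, Pi.single_apply, h]

lemma bcirc_eq : Bcirc n F = patternMap n F (0, Pi.single (-1) 1) := by
  ext i j
  have h : (i : ℕ) + (j : ℕ) = n - 1 ↔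
      ((i : ℕ) : ZMod n) + ((j : ℕ) : ZMod n) = -1 := by
    rw [eq_neg_iff_add_eq_zero, ← Nat.cast_add, ← Nat.cast_succ, ZMod.natCast_eq_zero_iff]
    have hi := i.2
    have hj := j.2
    constructor
    · intro h
      exact ⟨1, by omega⟩
    · rintro ⟨c, hc⟩
      -- `0 < i + j + 1 < 2 * n` leaves only the multiple `n` itself
      have hc1 : c = 1 := by
        have h0 : 0 < c := by
          rcases Nat.eq_zero_or_pos c with rfl | h
          · omega
          · exact h
        have h2 : c < 2 := by
          by_contra! hge
          have := Nat.mul_le_mul_left n hge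
          omega
        omega
      subst hc1
      omega
  simp [Bcirc, patternMap_apply, Pi.single_apply, h]

lemma algebraMap_eq (r : F) :
    algebraMap F (Matrix (Fin n) (Fin n) F) r = patternMap n F (Pi.single 0 r, 0) := by
  ext i j
  have h : i = j ↔ ((j : ℕ) : ZMod n) - ((i : ℕ) : ZMod n) = 0 := by
    rw [sub_eq_zero, eq_comm]
    exact (finZMod n).injective.eq_iff.symm
  simp [Matrix.algebraMap_matrix_apply, patternMap_apply, Pi.single_apply, h]

lemma adjoin_le_range {M : Matrix (Fin n) (Fin n) F}
    (hM : M ∈ Algebra.adjoin F ({Acirc n F, Bcirc n F} : Set (Matrix (Fin n) (Fin n) F))) :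
    M ∈ LinearMap.range (patternMap n F) := by
  induction hM using Algebra.adjoin_induction with
  | mem x hx =>
    rcases hx with rfl | rfl
    · exact ⟨_, acirc_eq.symm⟩
    · exact ⟨_, bcirc_eq.symm⟩
  | algebraMap r => exact ⟨_, (algebraMap_eq r).symm⟩
  | add x y _ _ hx hy => exact add_mem hx hy
  | mul x y _ _ hx hy =>
    obtain ⟨⟨f, g⟩, rfl⟩ := hx
    obtain ⟨⟨f', g'⟩, rfl⟩ := hy
    exact ⟨_, (patternMap_mul f g f' g').symm⟩

lemma acirc_pow (k : ℕ) : Acirc n F ^ k = patternMap n F (Pi.single (k : ZMod n) 1, 0) := by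
  induction k with
  | zero => simpa using algebraMap_eq (n := n) (1 : F)
  | succ k ih =>
    rw [pow_succ, ih, acirc_eq, patternMap_mul]
    congr 2
    · funext t
      simp only [Pi.single_apply, ite_mul, one_mul, zero_mul, Pi.zero_apply, add_zero,
        Finset.sum_ite_eq', Finset.mem_univ, if_true, sub_eq_iff_eq_add', Nat.cast_succ]
    · funext t
      simp

lemma acirc_pow_mul_bcirc (k : ℕ) :
    Acirc n F ^ k * Bcirc n F = patternMap n F (0, Pi.single (-1 - (k : ZMod n)) 1) := by
  rw [acirc_pow, bcirc_eq, patternMap_mul]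
  congr 2
  · funext t
    simp
  · funext t
    simp only [Pi.single_apply, ite_mul, one_mul, zero_mul, Pi.zero_apply, add_zero,
      Finset.sum_ite_eq', Finset.mem_univ, if_true, eq_sub_iff_add_eq']

lemma range_le_adjoin (p : (ZMod n → F) × (ZMod n → F)) :
    patternMap n F p ∈
      Algebra.adjoin F ({Acirc n F, Bcirc n F} : Set (Matrix (Fin n) (Fin n) F)) := by
  set S := Algebra.adjoin F ({Acirc n F, Bcirc n F} : Set (Matrix (Fin n) (Fin n) F)) with hS
  have hA : Acirc n F ∈ S := Algebra.subset_adjoin (by simp)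
  have hB : Bcirc n F ∈ S := Algebra.subset_adjoin (by simp)
  have h1 : ∀ c : ZMod n, patternMap n F (Pi.single c 1, 0) ∈ S := fun c => by
    have := pow_mem hA c.val
    rwa [acirc_pow, ZMod.natCast_zmod_val] at this
  have h2 : ∀ c : ZMod n, patternMap n F (0, Pi.single c 1) ∈ S := fun c => by
    have := mul_mem (pow_mem hA (-1 - c).val) hB
    rwa [acirc_pow_mul_bcirc, ZMod.natCast_zmod_val, sub_sub_cancel] at this
  obtain ⟨f, g⟩ := p
  have hp : ((f, g) : (ZMod n → F) × (ZMod n → F)) =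
      ∑ c, f c • ((Pi.single c 1, 0) : (ZMod n → F) × (ZMod n → F)) +
        ∑ c, g c • ((0, Pi.single c 1) : (ZMod n → F) × (ZMod n → F)) := by
    ext t <;> simp [Prod.fst_sum, Prod.snd_sum, Finset.sum_apply, Pi.single_apply]
  rw [hp, map_add, map_sum, map_sum]
  refine add_mem (sum_mem fun c _ => ?_) (sum_mem fun c _ => ?_)
  · rw [map_smul]
    exact S.smul_mem (h1 c) _
  · rw [map_smul]
    exact S.smul_mem (h2 c) _

lemma mem_ker_iff (f g : ZMod n → F) :
    (f, g) ∈ LinearMap.ker (patternMap n F) ↔ ∀ a b : ZMod n, f (b - a) + g (a + b) = 0 := by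
  rw [LinearMap.mem_ker]
  constructor
  · intro h a b
    have := congrFun (congrFun h ((finZMod n).symm a)) ((finZMod n).symm b)
    rw [patternMap_apply] at this
    have e : ∀ z : ZMod n, ((((finZMod n).symm z : Fin n) : ℕ) : ZMod n) = z :=
      (finZMod n).apply_symm_apply
    simpa [e] using this
  · intro h
    ext i j
    exact h _ _

/-- The linear map sending `h : ZMod d → F` to the pair `(h, -h)` of functions pulled back to
`ZMod n`; for `d = gcd 2 n` it parametrizes the kernel of `patternMap`. -/
def kerParam (F : Type*) [Field F] {d n : ℕ} (hd : d ∣ n) :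
    (ZMod d → F) →ₗ[F] (ZMod n → F) × (ZMod n → F) where
  toFun h := (fun x => h (ZMod.castHom hd (ZMod d) x), fun x => -h (ZMod.castHom hd (ZMod d) x))
  map_add' h k := by
    ext x <;> simp [add_comm]
  map_smul' c h := by
    ext x <;> simp

/-- The conditions `d ∣ n`, `d ∣ 2` and `d ∈ 2 ℤ/n` together say that `d` is the gcd of `2`
and `n`. -/
lemma finrank_ker {d : ℕ} (hd : d ∣ n) (hd2 : d ∣ 2) (hu : ∃ u : ZMod n, (d : ZMod n) = 2 * u) :
    Module.finrank F (LinearMap.ker (patternMap n F)) = d := by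
  have : NeZero d := ⟨by rintro rfl; omega⟩
  have hinj : Function.Injective (kerParam F hd) := by
    intro h k hk
    funext y
    obtain ⟨x, rfl⟩ := ZMod.castHom_surjective hd y
    exact congrFun (congrArg Prod.fst hk) x
  have hrange : LinearMap.range (kerParam F hd) = LinearMap.ker (patternMap n F) := by
    apply le_antisymm
    · rintro _ ⟨h, rfl⟩
      refine (mem_ker_iff _ _).2 fun a b => ?_
      have h2 : (2 : ZMod d) = 0 := by
        exact_mod_cast (ZMod.natCast_eq_zero_iff 2 d).2 hd2
      have : ZMod.castHom hd (ZMod d) (b - a) = ZMod.castHom hd (ZMod d) (a + b) := by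
        rw [map_sub, map_add]
        linear_combination (-ZMod.castHom hd (ZMod d) a) * h2
      change h _ + -h _ = 0
      rw [this, add_neg_cancel]
    · rintro ⟨f, g⟩ hfg
      rw [mem_ker_iff] at hfg
      have hg : ∀ x, g x = -f x := fun x => by
        have := hfg 0 x
        rw [sub_zero, zero_add] at this
        linear_combination this
      have hper : ∀ x a, f (x + 2 * a) = f x := fun x a => by
        have := hfg a (x + a)
        rw [hg, add_sub_cancel_right, show a + (x + a) = x + 2 * a by ring] at this
        linear_combination -this
      obtain ⟨u, hu⟩ := hu
      have key : ∀ x : ZMod n,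
          f (((ZMod.castHom hd (ZMod d) x).val : ℕ) : ZMod n) = f x := fun x => by
        have hv : (ZMod.castHom hd (ZMod d) x).val = x.val % d := by
          conv_lhs => rw [← ZMod.natCast_zmod_val x, map_natCast, ZMod.val_natCast]
        have hx : x = ((x.val % d : ℕ) : ZMod n) + 2 * (u * ((x.val / d : ℕ) : ZMod n)) := by
          rw [← mul_assoc, ← hu, ← Nat.cast_mul, ← Nat.cast_add, Nat.mod_add_div,
            ZMod.natCast_zmod_val]
        rw [hv]
        conv_rhs => rw [hx, hper]
      refine ⟨fun y => f ((y.val : ℕ) : ZMod n), ?_⟩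
      refine Prod.ext (funext fun x => key x) (funext fun x => ?_)
      change -f _ = g x
      rw [key, hg]
  rw [← hrange, LinearMap.finrank_range_of_inj hinj, Module.finrank_fintype_fun_eq_card,
    ZMod.card]

lemma finrank_adjoin {d : ℕ} (hd : d ∣ n) (hd2 : d ∣ 2)
    (hu : ∃ u : ZMod n, (d : ZMod n) = 2 * u) :
    Module.finrank F
      ↥(Algebra.adjoin F ({Acirc n F, Bcirc n F} : Set (Matrix (Fin n) (Fin n) F))) =
      2 * n - d := by
  have hS : Subalgebra.toSubmodule
      (Algebra.adjoin F ({Acirc n F, Bcirc n F} : Set (Matrix (Fin n) (Fin n) F))) =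
      LinearMap.range (patternMap n F) := by
    apply le_antisymm
    · exact fun M hM => adjoin_le_range hM
    · rintro _ ⟨p, rfl⟩
      exact range_le_adjoin p
  have hrn := LinearMap.finrank_range_add_finrank_ker (patternMap n F)
  rw [finrank_ker hd hd2 hu, Module.finrank_prod, Module.finrank_fintype_fun_eq_card,
    ZMod.card, ← hS, Subalgebra.finrank_toSubmodule] at hrn
  omega

end

theorem stmt_4 (F : Type*) [Field F] (n : ℕ) (hn : 3 ≤ n) :
    Module.finrank F
        ↥(Algebra.adjoin F ({Acirc n F, Bcirc n F} : Set (Matrix (Fin n) (Fin n) F))) =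
      if Even n then 2 * n - 2 else 2 * n - 1 := by
  have : NeZero n := ⟨by omega⟩
  split_ifs with h
  · exact finrank_adjoin h.two_dvd dvd_rfl ⟨1, by simp⟩
  · obtain ⟨k, hk⟩ := Nat.not_even_iff_odd.1 h
    refine finrank_adjoin (one_dvd n) (one_dvd 2) ⟨(k + 1 : ℕ), ?_⟩
    have h0 : ((2 * k + 1 : ℕ) : ZMod n) = 0 := by rw [← hk, ZMod.natCast_self]
    push_cast at h0 ⊢
    linear_combination -h0
end

section
/- Let F be a field and n ≥ 3. The intersection of the F-linear span of {I, A_n, A_n^2, …, A_n^{n−1}} (the space of circulants) with the F-linear span of {B_n, B_nA_n, …, B_nA_n^{n−1}} (the space of anti-circulants) has dimension 1 over F if n is odd, and dimension 2 if n is even. -/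
open scoped Fin.CommRing

theorem Acirc_pow_apply {n : ℕ} [NeZero n] (F : Type*) [Field F] (k : ℕ) (i j : Fin n) :
    (Acirc n F ^ k) i j = if j = i + (k : Fin n) then 1 else 0 := by
  induction k generalizing i j with
  | zero => simp [Matrix.one_apply, eq_comm]
  | succ k ih =>
    have hA : ∀ i j : Fin n, Acirc n F i j = if j = i + 1 then 1 else 0 := by
      intro i j
      have : ((j : ℕ) = ((i : ℕ) + 1) % n) ↔ j = i + 1 := by
        rw [Fin.ext_iff, Fin.val_add, Fin.val_one']
        simp
      simp [Acirc, this]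
    rw [pow_succ, Matrix.mul_apply]
    simp only [ih, hA, ite_mul, one_mul, zero_mul]
    simp [add_assoc]

theorem Bcirc_mul_apply {n : ℕ} [NeZero n] (F : Type*) [Field F]
    (M : Matrix (Fin n) (Fin n) F) (i j : Fin n) :
    (Bcirc n F * M) i j = M i.rev j := by
  have hB : ∀ i j : Fin n, Bcirc n F i j = if j = i.rev then 1 else 0 := by
    intro i j
    have : ((i : ℕ) + (j : ℕ) = n - 1) ↔ j = i.rev := by
      rw [Fin.ext_iff, Fin.val_rev]
      omega
    simp [Bcirc, this]
  rw [Matrix.mul_apply]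
  simp [hB]

theorem fin_rev_add_self_add_one {n : ℕ} [NeZero n] (i : Fin n) : i.rev + i + 1 = 0 := by
  apply Fin.ext
  have : n - (i + 1) + (i : ℕ) + 1 = n := by omega
  simp [Fin.val_add, Fin.val_rev, this]

theorem mem_span_circ_iff {n : ℕ} [NeZero n] (F : Type*) [Field F]
    (M : Matrix (Fin n) (Fin n) F) :
    M ∈ Submodule.span F (Set.range fun i : Fin n => Acirc n F ^ (i : ℕ)) ↔
      ∀ i j, M i j = M 0 (j - i) := by
  constructor
  · intro h
    induction h using Submodule.span_induction with
    | mem x hx =>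
      obtain ⟨k, rfl⟩ := hx
      intro i j
      simp [Acirc_pow_apply, sub_eq_iff_eq_add, add_comm]
    | zero => simp
    | add x y _ _ hx hy =>
      intro i j
      rw [Matrix.add_apply, Matrix.add_apply, hx i j, hy i j]
    | smul a x _ hx =>
      intro i j
      rw [Matrix.smul_apply, Matrix.smul_apply, hx i j]
  · intro h
    have : M = ∑ k : Fin n, M 0 k • Acirc n F ^ (k : ℕ) := by
      ext i j
      rw [h i j, Matrix.sum_apply, Finset.sum_eq_single (j - i)]
      · simp [Acirc_pow_apply]
      · intro k _ hk
        have : j ≠ i + k := fun e => hk (by rw [e]; abel)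
        simp [Acirc_pow_apply, this]
      · simp
    rw [this]
    exact Submodule.sum_mem _ fun k _ =>
      Submodule.smul_mem _ _ (Submodule.subset_span ⟨k, rfl⟩)

theorem mem_span_anticirc_iff {n : ℕ} [NeZero n] (F : Type*) [Field F]
    (M : Matrix (Fin n) (Fin n) F) :
    M ∈ Submodule.span F (Set.range fun i : Fin n => Bcirc n F * Acirc n F ^ (i : ℕ)) ↔
      ∀ i j, M i j = M 0 (j + i) := by
  have hBA : ∀ k i j : Fin n, (Bcirc n F * Acirc n F ^ (k : ℕ)) i j
      = if j + i + 1 = k then 1 else 0 := by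
    intro k i j
    rw [Bcirc_mul_apply, Acirc_pow_apply]
    have h0 := fin_rev_add_self_add_one i
    have : (j = i.rev + ((k : ℕ) : Fin n)) ↔ j + i + 1 = k := by
      rw [Fin.cast_val_eq_self]
      constructor
      · rintro rfl
        calc i.rev + k + i + 1 = (i.rev + i + 1) + k := by abel
          _ = k := by rw [h0, zero_add]
      · rintro rfl
        calc j = (i.rev + i + 1) + j := by rw [h0, zero_add]
          _ = i.rev + (j + i + 1) := by abel
    simp only [this]
  constructor
  · intro h
    induction h using Submodule.span_induction with
    | mem x hx =>
      obtain ⟨k, rfl⟩ := hx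
      intro i j
      simp [hBA]
    | zero => simp
    | add x y _ _ hx hy =>
      intro i j
      rw [Matrix.add_apply, Matrix.add_apply, hx i j, hy i j]
    | smul a x _ hx =>
      intro i j
      rw [Matrix.smul_apply, Matrix.smul_apply, hx i j]
  · intro h
    have : M = ∑ k : Fin n, M 0 (k - 1) • (Bcirc n F * Acirc n F ^ (k : ℕ)) := by
      ext i j
      rw [h i j, Matrix.sum_apply, Finset.sum_eq_single (j + i + 1)]
      · simp [hBA]
      · intro k _ hk
        simp [hBA, hk.symm]
      · simp
    rw [this]
    exact Submodule.sum_mem _ fun k _ =>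
      Submodule.smul_mem _ _ (Submodule.subset_span ⟨k, rfl⟩)

/-- The first row of a matrix that is both circulant and anti-circulant is `2`-periodic. -/
theorem first_row_natCast {n : ℕ} [NeZero n] {F : Type*} {M : Matrix (Fin n) (Fin n) F}
    (hA : ∀ i j, M i j = M 0 (j - i)) (hB : ∀ i j, M i j = M 0 (j + i)) (k : ℕ) :
    M 0 (k : Fin n) = M 0 ((k % 2 : ℕ) : Fin n) := by
  induction k using Nat.strong_induction_on with
  | _ k ih =>
    rcases Nat.lt_or_ge k 2 with hk | hk
    · rw [Nat.mod_eq_of_lt hk]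
    · obtain ⟨m, rfl⟩ := Nat.exists_eq_add_of_le' hk
      rw [Nat.add_mod_right, ← ih m (by omega)]
      -- both sides equal the entry of row `1` in column `m + 1`
      have h1 := hA 1 ((m : Fin n) + 1)
      have h2 := hB 1 ((m : Fin n) + 1)
      rw [add_sub_cancel_right] at h1
      rw [← h1, h2]
      congr 1
      push_cast
      rw [add_assoc, one_add_one_eq_two]

theorem stmt_5 (F : Type*) [Field F] (n : ℕ) (hn : 3 ≤ n) :
    Module.finrank F
        ↥(Submodule.span F (Set.range fun i : Fin n => Acirc n F ^ (i : ℕ)) ⊓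
          Submodule.span F (Set.range fun i : Fin n => Bcirc n F * Acirc n F ^ (i : ℕ))) =
      if Odd n then 1 else 2 := by
  have : NeZero n := ⟨by omega⟩
  set S := Submodule.span F (Set.range fun i : Fin n => Acirc n F ^ (i : ℕ)) ⊓
    Submodule.span F (Set.range fun i : Fin n => Bcirc n F * Acirc n F ^ (i : ℕ)) with hS
  have hmem : ∀ M, M ∈ S ↔ (∀ i j, M i j = M 0 (j - i)) ∧ ∀ i j, M i j = M 0 (j + i) := by
    intro M
    rw [hS, Submodule.mem_inf, mem_span_circ_iff, mem_span_anticirc_iff]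
  have hrow : ∀ M ∈ S, ∀ k : ℕ, M 0 (k : Fin n) = M 0 ((k % 2 : ℕ) : Fin n) := fun M hM k =>
    first_row_natCast ((hmem M).1 hM).1 ((hmem M).1 hM).2 k
  have hval1 : ((1 : Fin n) : ℕ) = 1 := by
    rw [Fin.val_one', Nat.mod_eq_of_lt (by omega)]
  -- reading off the entries `(0, 0)` and `(0, 1)` is injective on the intersection
  have hzero : ∀ M ∈ S, M 0 0 = 0 → M 0 1 = 0 → M = 0 := by
    intro M hM h0 h1
    ext i j
    rw [((hmem M).1 hM).1 i j, ← Fin.cast_val_eq_self (j - i), hrow M hM]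
    rcases Nat.mod_two_eq_zero_or_one ((j - i : Fin n) : ℕ) with h | h <;> rw [h] <;>
      simpa
  split_ifs with hodd
  · let f : S →ₗ[F] F :=
      { toFun := fun M => M.1 0 0
        map_add' := fun _ _ => rfl
        map_smul' := fun _ _ => rfl }
    have hf : Function.Bijective f := by
      constructor
      · rw [← LinearMap.ker_eq_bot, LinearMap.ker_eq_bot']
        rintro ⟨M, hM⟩ h0
        have h0 : M 0 0 = 0 := h0
        apply Subtype.ext
        refine hzero M hM h0 ?_
        -- `n` is odd and represents `0`, so `2`-periodicity links columns `0` and `1`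
        have := hrow M hM n
        rw [Nat.odd_iff.1 hodd] at this
        simpa [h0] using this.symm
      · intro a
        exact ⟨⟨Matrix.of fun _ _ => a, (hmem _).2 ⟨fun _ _ => rfl, fun _ _ => rfl⟩⟩, rfl⟩
    rw [(LinearEquiv.ofBijective f hf).finrank_eq, Module.finrank_self]
  · have heven : 2 ∣ n := (Nat.not_odd_iff_even.1 hodd).two_dvd
    let f : S →ₗ[F] F × F :=
      { toFun := fun M => (M.1 0 0, M.1 0 1)
        map_add' := fun _ _ => rfl
        map_smul' := fun _ _ => rfl }
    have hf : Function.Bijective f := by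
      constructor
      · rw [← LinearMap.ker_eq_bot, LinearMap.ker_eq_bot']
        rintro ⟨M, hM⟩ h0
        exact Subtype.ext (hzero M hM (congrArg Prod.fst h0) (congrArg Prod.snd h0))
      · rintro ⟨a, b⟩
        refine ⟨⟨Matrix.of fun i j => if ((i : ℕ) + j) % 2 = 0 then a else b,
          (hmem _).2 ⟨fun i j => ?_, fun i j => ?_⟩⟩, ?_⟩
        · have : (((0 : Fin n) : ℕ) + ((j - i : Fin n) : ℕ)) % 2 = ((i : ℕ) + j) % 2 := by
            rw [Fin.val_zero, zero_add, Fin.val_sub, Nat.mod_mod_of_dvd _ heven]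
            omega
          simp only [Matrix.of_apply, this]
        · have : (((0 : Fin n) : ℕ) + ((j + i : Fin n) : ℕ)) % 2 = ((i : ℕ) + j) % 2 := by
            rw [Fin.val_zero, zero_add, Fin.val_add, Nat.mod_mod_of_dvd _ heven, add_comm]
          simp only [Matrix.of_apply, this]
        · apply Prod.ext
          · change (if (((0 : Fin n) : ℕ) + ((0 : Fin n) : ℕ)) % 2 = 0 then a else b) = a
            simp
          · change (if (((0 : Fin n) : ℕ) + ((1 : Fin n) : ℕ)) % 2 = 0 then a else b) = b
            rw [hval1]
            simp
    rw [(LinearEquiv.ofBijective f hf).finrank_eq, Module.finrank_prod, Module.finrank_self]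
end

section
/- Let F be a field and n ≥ 3. The length of the bicirculant algebra C_n(F) equals n − 1; precisely, every generating set S of C_n(F) satisfies l(S) ≤ n − 1, and there exists a generating set S of C_n(F) with l(S) = n − 1. -/
/-! ### Powers of a subspace in a finite-dimensional algebra -/

open Module

section general
variable {F A : Type*} [Field F] [Ring A] [Algebra F A]

/-- Once the chain of powers stops growing, it is constant from there on. -/
lemma pow_le_of_succ_le {V : Submodule F A} (h1 : 1 ≤ V) {k : ℕ}
    (h : V ^ (k + 1) ≤ V ^ k) (j : ℕ) :
    V ^ j ≤ V ^ k := by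
  have h2 : ∀ i, V ^ (k + i) ≤ V ^ k := by
    intro i
    induction i with
    | zero => simp
    | succ i ih =>
      calc V ^ (k + (i + 1)) = V ^ (k + i) * V := by rw [← add_assoc, pow_succ]
        _ ≤ V ^ k * V := mul_le_mul_left ih V
        _ ≤ V ^ k := by rwa [← pow_succ]
  calc V ^ j ≤ V ^ (k + j) := pow_le_pow_right' h1 (by omega)
    _ ≤ V ^ k := h2 j

/-- If `V ^ (k + 1)` exceeds `V ^ k` by at most one dimension and the chain grows once more, then the
extra dimension is spanned by a pure power. Starting from a product `p * s ∉ V ^ (k + 1)`, the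
factors of `p` are traded one at a time for copies of `s`: writing `p = t * p'`, the elements
`p * s ^ j` and `p' * s ^ (j + 1)` are proportional modulo `V ^ k`. -/
lemma exists_pow_notMem_s6 {V : Submodule F A} {k : ℕ}
    (hjump : ∀ w ∈ V ^ (k + 1), w ∉ V ^ k → V ^ (k + 1) ≤ V ^ k ⊔ Submodule.span F {w})
    (hne : ¬ V ^ (k + 2) ≤ V ^ (k + 1)) :
    ∃ s ∈ V, s ^ (k + 1) ∉ V ^ k := by
  have mulr : ∀ {i : ℕ} {x y : A}, x ∈ V ^ i → y ∈ V → x * y ∈ V ^ (i + 1) := by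
    intro i x y hx hy; rw [pow_succ]; exact Submodule.mul_mem_mul hx hy
  have mull : ∀ {i : ℕ} {x y : A}, x ∈ V → y ∈ V ^ i → x * y ∈ V ^ (i + 1) := by
    intro i x y hx hy; rw [pow_succ']; exact Submodule.mul_mem_mul hx hy
  obtain ⟨s, hs, p, hp, hps⟩ : ∃ s ∈ V, ∃ p ∈ V ^ (k + 1), p * s ∉ V ^ (k + 1) := by
    by_contra! hcon
    apply hne
    rw [pow_succ V (k + 1), Submodule.mul_le]
    exact fun p hp s hs => hcon s hs p hp
  -- `j` factors of `p` have been replaced by `s`, and `m = k + 1 - j` remain.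
  have key : ∀ j m : ℕ, m + j = k + 1 → ∃ p ∈ V ^ m, p * s ^ (j + 1) ∉ V ^ (k + 1) := by
    intro j
    induction j with
    | zero =>
      intro m hm
      obtain rfl : m = k + 1 := by omega
      exact ⟨p, hp, by simpa using hps⟩
    | succ j ih =>
      intro m hm
      obtain ⟨q, hq, hqs⟩ := ih (m + 1) (by omega)
      obtain ⟨t, ht, p', hp', hts⟩ : ∃ t ∈ V, ∃ p' ∈ V ^ m,
          (t * p') * s ^ (j + 1) ∉ V ^ (k + 1) := by
        by_contra! hcon
        apply hqs
        clear hqs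
        rw [pow_succ'] at hq
        induction hq using Submodule.mul_induction_on' with
        | mem_mul_mem t ht p' hp' => exact hcon t ht p' hp'
        | add x _ y _ hx hy => rw [add_mul]; exact add_mem hx hy
      refine ⟨p', hp', fun hbad => hts ?_⟩
      have hw : p' * s ^ (j + 1) ∈ V ^ (k + 1) := by
        rw [← hm, pow_add]
        exact Submodule.mul_mem_mul hp' (Submodule.pow_mem_pow V hs _)
      have hw' : p' * s ^ (j + 1) ∉ V ^ k := fun h => hts (by
        rw [mul_assoc]; exact mull ht h)
      have hx : (t * p') * s ^ j ∈ V ^ (k + 1) := by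
        rw [show k + 1 = (m + 1) + j by omega, pow_add]
        exact Submodule.mul_mem_mul (mull ht hp') (Submodule.pow_mem_pow V hs _)
      obtain ⟨a, ha, b, hb, hab⟩ := Submodule.mem_sup.1 (hjump _ hw hw' hx)
      obtain ⟨c, rfl⟩ := Submodule.mem_span_singleton.1 hb
      rw [pow_succ s, ← mul_assoc, ← hab, add_mul, smul_mul_assoc, mul_assoc, ← pow_succ]
      exact add_mem (mulr ha hs) (Submodule.smul_mem _ _ hbad)
  obtain ⟨q, hq, hqs⟩ := key (k + 1) 0 (by omega)
  refine ⟨s, hs, fun h => hqs ?_⟩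
  rw [pow_zero, Submodule.mem_one] at hq
  obtain ⟨c, rfl⟩ := hq
  rw [← Algebra.smul_def]
  exact Submodule.smul_mem _ _ (by rw [pow_succ s]; exact mulr h hs)

/-- If the step from `V ^ k` to `V ^ (k + 1)` is spanned by `s ^ (k + 1)`, every later step is spanned
by the corresponding power of `s`. -/
lemma pow_add_le_of_jump {V : Submodule F A} {k : ℕ} {s : A} (hs : s ∈ V)
    (hjump : V ^ (k + 1) ≤ V ^ k ⊔ Submodule.span F {s ^ (k + 1)}) (j : ℕ) :
    V ^ (k + j + 1) ≤ V ^ (k + j) ⊔ Submodule.span F {s ^ (k + j + 1)} := by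
  induction j with
  | zero => simpa using hjump
  | succ j ih =>
    have step : ∀ i, V ^ (i + 1) ≤ V ^ i ⊔ Submodule.span F {s ^ (i + 1)} →
      V ^ (i + 2) ≤ V ^ (i + 1) ⊔ Submodule.span F {s ^ (i + 2)} := by
      intro i hi
      -- `t · (v + c s^(i+1)) = t v + c (t s^i) s`, and `t s^i ∈ V^(i+1)` is rewritten again.
      rw [pow_succ' V (i + 1), Submodule.mul_le]
      intro t ht x hx
      obtain ⟨a, ha, b, hb, rfl⟩ := Submodule.mem_sup.1 (hi hx)
      obtain ⟨c, rfl⟩ := Submodule.mem_span_singleton.1 hb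
      have h1 : t * s ^ i ∈ V ^ (i + 1) := by
        rw [pow_succ']; exact Submodule.mul_mem_mul ht (Submodule.pow_mem_pow V hs _)
      obtain ⟨a', ha', b', hb', hab⟩ := Submodule.mem_sup.1 (hi h1)
      obtain ⟨c', rfl⟩ := Submodule.mem_span_singleton.1 hb'
      have h2 : t * (a + c • s ^ (i + 1)) = (t * a + c • (a' * s)) + (c * c') • s ^ (i + 2) := by
        have : t * s ^ (i + 1) = a' * s + c' • s ^ (i + 2) := by
          rw [pow_succ, ← mul_assoc, ← hab, add_mul, smul_mul_assoc, ← pow_succ]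
        rw [mul_add, mul_smul_comm, this, smul_add, smul_smul, add_assoc]
      rw [h2]
      refine Submodule.add_mem_sup (add_mem ?_ (Submodule.smul_mem _ _ ?_))
        (Submodule.smul_mem _ _ (Submodule.mem_span_singleton_self _))
      · rw [pow_succ']; exact Submodule.mul_mem_mul ht ha
      · rw [pow_succ]; exact Submodule.mul_mem_mul ha' hs
    exact step (k + j) ih

/-- In an algebra of dimension at most `2m + 1`, a subspace `V ∋ 1` with `s ^ (m + 1) ∈ V ^ m` for
all `s ∈ V` has powers that are stable from `V ^ m` on. -/
lemma pow_succ_le_of_finrank [FiniteDimensional F A] {V : Submodule F A} (h1 : 1 ≤ V) {m : ℕ}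
    (hd : finrank F A ≤ 2 * m + 1) (hCH : ∀ s ∈ V, s ^ (m + 1) ∈ V ^ m) :
    V ^ (m + 1) ≤ V ^ m := by
  by_contra hcon
  have hgrow : ∀ k ≤ m, ¬ V ^ (k + 1) ≤ V ^ k := fun k hk h =>
    hcon ((pow_le_of_succ_le h1 h _).trans (pow_le_pow_right' h1 hk))
  obtain ⟨k, hk, hkj⟩ : ∃ k < m, finrank F ↥(V ^ (k + 1)) ≤ finrank F ↥(V ^ k) + 1 := by
    by_contra! hbig
    have hdim : ∀ k ≤ m, 2 * k + 1 ≤ finrank F ↥(V ^ k) := by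
      intro k
      induction k with
      | zero =>
        intro _
        have : finrank F ↥(V ^ 0) ≠ 0 := by
          intro h0
          rw [Submodule.finrank_eq_zero] at h0
          apply hgrow 0 (Nat.zero_le _)
          have : (1 : A) = 0 := by
            have : (1 : A) ∈ V ^ 0 := by rw [pow_zero]; exact Submodule.one_le.1 le_rfl
            rwa [h0, Submodule.mem_bot] at this
          intro x _
          rw [← mul_one x, this, mul_zero]; exact zero_mem _
        omega
      | succ k ih =>
        intro hk
        have := hbig k (by omega)
        have := ih (by omega)
        omega
    have htop : V ^ m = ⊤ := by
      apply Submodule.eq_top_of_finrank_eq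
      exact le_antisymm (Submodule.finrank_le _) (hd.trans (hdim m le_rfl))
    exact hcon (htop ▸ le_top)
  have hle : V ^ k ≤ V ^ (k + 1) := pow_le_pow_right' h1 (Nat.le_succ k)
  have hjump : ∀ w ∈ V ^ (k + 1), w ∉ V ^ k → V ^ (k + 1) ≤ V ^ k ⊔ Submodule.span F {w} := by
    intro w hw hw'
    have hlt : V ^ k < V ^ k ⊔ Submodule.span F {w} := by
      refine lt_of_le_of_ne le_sup_left fun h => hw' ?_
      rw [h]
      exact Submodule.mem_sup_right (Submodule.mem_span_singleton_self w)
    have hle2 : V ^ k ⊔ Submodule.span F {w} ≤ V ^ (k + 1) :=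
      sup_le hle ((Submodule.span_singleton_le_iff_mem _ _).2 hw)
    have := Submodule.finrank_lt_finrank_of_lt hlt
    exact (Submodule.eq_of_le_of_finrank_le hle2 (by omega)).ge
  obtain ⟨s, hs, hsk⟩ := exists_pow_notMem_s6 hjump (hgrow (k + 1) hk)
  have hfin := pow_add_le_of_jump hs (hjump _ (Submodule.pow_mem_pow V hs _) hsk) (m - k)
  rw [show k + (m - k) = m by omega] at hfin
  exact hcon (hfin.trans (sup_le le_rfl ((Submodule.span_singleton_le_iff_mem _ _).2 (hCH s hs))))

lemma pow_eq_top_of_adjoin {S : Set A} (hS : Algebra.adjoin F S = ⊤) {m : ℕ}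
    (h : (Submodule.span F ({1} ∪ S)) ^ (m + 1) ≤ (Submodule.span F ({1} ∪ S)) ^ m) :
    (Submodule.span F ({1} ∪ S)) ^ m = ⊤ := by
  set V := Submodule.span F ({1} ∪ S) with hV
  have h1 : 1 ≤ V := Submodule.one_le.2 (Submodule.subset_span (by simp))
  have hall := pow_le_of_succ_le h1 h
  rw [eq_top_iff]
  intro x _
  have hx : x ∈ Algebra.adjoin F S := hS ▸ Algebra.mem_top
  induction hx using Algebra.adjoin_induction with
  | mem x hx => exact hall 1 (by rw [pow_one]; exact Submodule.subset_span (Or.inr hx))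
  | algebraMap r => exact hall 0 (by rw [pow_zero]; exact Submodule.algebraMap_mem r)
  | add x y _ _ hx hy => exact add_mem (hx trivial) (hy trivial)
  | mul x y _ _ hx hy =>
    exact hall (m + m) (by rw [pow_add]; exact Submodule.mul_mem_mul (hx trivial) (hy trivial))

lemma pow_mem_of_monic {V : Submodule F A} (h1 : 1 ≤ V) {s : A} (hs : s ∈ V) {m : ℕ}
    {p : Polynomial F} (hp : p.Monic) (hdeg : p.natDegree = m + 1)
    (h0 : Polynomial.aeval s p = 0) : s ^ (m + 1) ∈ V ^ m := by
  rw [hp.as_sum, hdeg] at h0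
  simp only [map_add, map_pow, Polynomial.aeval_X, map_sum, map_mul, Polynomial.aeval_C] at h0
  rw [eq_neg_of_add_eq_zero_left h0]
  refine neg_mem (sum_mem fun i hi => ?_)
  rw [← Algebra.smul_def]
  exact Submodule.smul_mem _ _ (pow_le_pow_right' h1 (by have := Finset.mem_range.1 hi; omega)
    (Submodule.pow_mem_pow V hs i))

/-- The alternating word `a * b * a * ⋯` with the given number of factors. -/
def altWord (a b : A) : ℕ → A
  | 0 => 1
  | i + 1 => a * altWord b a i

/-- There are at most `2k + 1` alternating words of length at most `k` in two involutions, the empty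
word being shared by the two families. -/
lemma finrank_pow_le_of_involutions {a b : A} (ha : a * a = 1) (hb : b * b = 1) (k : ℕ) :
    finrank F ↥((Submodule.span F ({1} ∪ {a, b})) ^ k) ≤ 2 * k + 1 := by
  classical
  let T : ℕ → Finset A := fun k =>
    (Finset.range (k + 1)).image (altWord a b) ∪ (Finset.Icc 1 k).image (altWord b a)
  have hTu : ∀ {i k}, i ≤ k → altWord a b i ∈ Submodule.span F (T k : Set A) := by
    intro i k hi
    refine Submodule.subset_span (Finset.mem_union_left _ (Finset.mem_image_of_mem _ ?_))
    simp; omega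
  have hTw : ∀ {i k}, i ≤ k → altWord b a i ∈ Submodule.span F (T k : Set A) := by
    intro i k hi
    rcases Nat.eq_zero_or_pos i with rfl | hpos
    · exact hTu (i := 0) hi
    · refine Submodule.subset_span (Finset.mem_union_right _ (Finset.mem_image_of_mem _ ?_))
      simp; omega
  have hsub : ∀ k, (Submodule.span F ({1} ∪ {a, b})) ^ k ≤ Submodule.span F (T k : Set A) := by
    intro k
    induction k with
    | zero =>
      rw [pow_zero]
      exact Submodule.one_le.2 (hTu (i := 0) le_rfl)
    | succ k ih =>
      rw [pow_succ']
      refine (mul_le_mul_right ih _).trans ?_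
      rw [Submodule.span_mul_span, Submodule.span_le]
      rintro _ ⟨g, hg, x, hx, rfl⟩
      have hx' : (∃ i ≤ k, altWord a b i = x) ∨ (∃ i ≤ k, altWord b a i = x) := by
        simp only [T, Finset.coe_union, Finset.coe_image, Set.mem_union, Set.mem_image,
          Finset.mem_coe, Finset.mem_range, Finset.mem_Icc] at hx
        rcases hx with ⟨i, hi, h⟩ | ⟨i, hi, h⟩
        · exact Or.inl ⟨i, by omega, h⟩
        · exact Or.inr ⟨i, by omega, h⟩
      have haw : ∀ i, a * altWord a b (i + 1) = altWord b a i := fun i => by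
        rw [altWord, ← mul_assoc, ha, one_mul]
      have hbw : ∀ i, b * altWord b a (i + 1) = altWord a b i := fun i => by
        rw [altWord, ← mul_assoc, hb, one_mul]
      simp only [Set.mem_union, Set.mem_singleton_iff, Set.mem_insert_iff] at hg
      simp only [SetLike.mem_coe]
      rcases hg with rfl | rfl | rfl <;> rcases hx' with ⟨i, hi, rfl⟩ | ⟨i, hi, rfl⟩
      · rw [one_mul]; exact hTu (by omega)
      · rw [one_mul]; exact hTw (by omega)
      · cases i with
        | zero => exact hTu (i := 1) (by omega)
        | succ i => rw [haw]; exact hTw (by omega)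
      · exact hTu (i := i + 1) (by omega)
      · exact hTw (i := i + 1) (by omega)
      · cases i with
        | zero => exact hTw (i := 1) (by omega)
        | succ i => rw [hbw]; exact hTu (by omega)
  calc finrank F ↥((Submodule.span F ({1} ∪ {a, b})) ^ k)
      ≤ finrank F ↥(Submodule.span F (T k : Set A)) := Submodule.finrank_mono (hsub k)
    _ ≤ (T k).card := finrank_span_finset_le_card _
    _ ≤ (k + 1) + k := by
      refine (Finset.card_union_le _ _).trans (add_le_add ?_ ?_)
      · exact Finset.card_image_le.trans (by simp)
      · exact Finset.card_image_le.trans (by simp)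
    _ = 2 * k + 1 := by omega

end general

/-! ### Bicirculant matrices -/

section bicirculant
variable (F : Type*) [Field F] (n : ℕ)

/-- The matrix with entries `c.1 (i - j) + c.2 (i + j)`, indices taken mod `n`: the sum of the
circulant matrix of `c.1` and the anti-circulant matrix of `c.2`. -/
def bicircMap : ((Fin n → F) × (Fin n → F)) →ₗ[F] Matrix (Fin n) (Fin n) F where
  toFun c := Matrix.of fun i j => c.1 (i - j) + c.2 (i + j)
  map_add' c d := by ext i j; simp; ring
  map_smul' r c := by ext i j; simp; ring

variable {F n}

lemma bicircMap_apply (c : (Fin n → F) × (Fin n → F)) (i j : Fin n) :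
    bicircMap F n c i j = c.1 (i - j) + c.2 (i + j) := rfl

variable [NeZero n]

lemma Acirc_eq : Acirc n F = bicircMap F n (Pi.single (-1) 1, 0) := by
  ext i j
  have : ((j : ℕ) = ((i : ℕ) + 1) % n) ↔ i - j = -1 := by
    rw [sub_eq_iff_eq_add, eq_comm (a := i), neg_add_eq_iff_eq_add, add_comm 1 i, Fin.ext_iff,
      Fin.val_add, Fin.val_one', Nat.add_mod_mod]
  simp [Acirc, bicircMap_apply, Pi.single_apply, this]

lemma Bcirc_eq : Bcirc n F = bicircMap F n (0, Pi.single (-1) 1) := by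
  ext i j
  have : ((i : ℕ) + (j : ℕ) = n - 1) ↔ i + j = -1 := by
    rw [eq_neg_iff_add_eq_zero, Fin.ext_iff, Fin.val_add, Fin.val_add, Fin.val_one',
      Nat.add_mod_mod, Nat.mod_add_mod]
    have hi := i.2
    have hj := j.2
    simp only [Fin.val_zero, ← Nat.dvd_iff_mod_eq_zero]
    constructor
    · intro h
      exact ⟨1, by omega⟩
    · rintro ⟨c, hc⟩
      have : c = 1 := by
        have : c < 2 := by by_contra! h; nlinarith
        interval_cases c <;> omega
      subst this; omega
  simp [Bcirc, bicircMap_apply, Pi.single_apply, this]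

lemma bicircMap_mul (c d : (Fin n → F) × (Fin n → F)) :
    bicircMap F n c * bicircMap F n d = bicircMap F n
      (fun x => ∑ k, (c.1 (x - k) * d.1 k + c.2 (x + k) * d.2 k),
       fun x => ∑ k, (c.1 (x - k) * d.2 k + c.2 (x + k) * d.1 k)) := by
  ext i j
  have h1 : ∑ k, (c.1 (i - k) * d.1 (k - j)) = ∑ k, c.1 (i - j - k) * d.1 k :=
    Fintype.sum_equiv (Equiv.subRight j) _ _ fun k => by simp [sub_sub_sub_cancel_right]
  have h2 : ∑ k, (c.2 (i + k) * d.2 (k + j)) = ∑ k, c.2 (i - j + k) * d.2 k :=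
    Fintype.sum_equiv (Equiv.addRight j) _ _ fun k => by
      rw [Equiv.coe_addRight, show i - j + (k + j) = i + k by abel]
  have h3 : ∑ k, (c.1 (i - k) * d.2 (k + j)) = ∑ k, c.1 (i + j - k) * d.2 k :=
    Fintype.sum_equiv (Equiv.addRight j) _ _ fun k => by
      rw [Equiv.coe_addRight, show i + j - (k + j) = i - k by abel]
  have h4 : ∑ k, (c.2 (i + k) * d.1 (k - j)) = ∑ k, c.2 (i + j + k) * d.1 k :=
    Fintype.sum_equiv (Equiv.subRight j) _ _ fun k => by
      rw [Equiv.subRight_apply, show i + j + (k - j) = i + k by abel]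
  simp only [Matrix.mul_apply, bicircMap_apply, Finset.sum_add_distrib, ← h1, ← h2, ← h3, ← h4,
    add_mul, mul_add]
  abel

lemma one_eq_bicircMap : (1 : Matrix (Fin n) (Fin n) F) = bicircMap F n (Pi.single 0 1, 0) := by
  ext i j
  simp [bicircMap_apply, Pi.single_apply, Matrix.one_apply, sub_eq_zero]

lemma Acirc_mul (c : (Fin n → F) × (Fin n → F)) :
    Acirc n F * bicircMap F n c = bicircMap F n (fun x => c.1 (x + 1), fun x => c.2 (x + 1)) := by
  rw [Acirc_eq, bicircMap_mul]
  congr 1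
  have : ∀ x k : Fin n, x - k = -1 ↔ k = x + 1 := fun x k => by
    rw [sub_eq_iff_eq_add, neg_add_eq_sub, eq_sub_iff_add_eq, eq_comm]
  simp [Pi.single_apply, this]

lemma mul_Bcirc (c : (Fin n → F) × (Fin n → F)) :
    bicircMap F n c * Bcirc n F = bicircMap F n (fun x => c.2 (x - 1), fun x => c.1 (x + 1)) := by
  rw [Bcirc_eq, bicircMap_mul]
  simp [Pi.single_apply, sub_eq_add_neg]

lemma reflection_mul_self (k : Fin n) :
    bicircMap F n (0, Pi.single k 1) * bicircMap F n (0, Pi.single k 1) = 1 := by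
  rw [bicircMap_mul, one_eq_bicircMap]
  congr 1
  refine Prod.ext ?_ ?_ <;> ext x <;> simp [Pi.single_apply]

lemma Bcirc_mul_self : Bcirc n F * Bcirc n F = 1 := by
  rw [Bcirc_eq, reflection_mul_self]

lemma AB_mul_self : (Acirc n F * Bcirc n F) * (Acirc n F * Bcirc n F) = 1 := by
  have : Acirc n F * Bcirc n F = bicircMap F n (0, Pi.single (-1 - 1) 1) := by
    rw [Bcirc_eq, Acirc_mul]
    congr 1
    refine Prod.ext ?_ ?_ <;> ext x <;> simp [Pi.single_apply, eq_sub_iff_add_eq]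
  rw [this, reflection_mul_self]

open Fin.CommRing in
variable (F n) in
lemma adjoin_eq_range :
    Subalgebra.toSubmodule (Algebra.adjoin F {Acirc n F, Bcirc n F}) =
      LinearMap.range (bicircMap F n) := by
  apply le_antisymm
  · intro x hx
    rw [Subalgebra.mem_toSubmodule] at hx
    induction hx using Algebra.adjoin_induction with
    | mem x hx =>
      rcases hx with rfl | rfl
      · exact ⟨_, Acirc_eq.symm⟩
      · exact ⟨_, Bcirc_eq.symm⟩
    | algebraMap r =>
      rw [Algebra.algebraMap_eq_smul_one, one_eq_bicircMap]
      exact Submodule.smul_mem _ _ ⟨_, rfl⟩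
    | add x y _ _ hx hy => exact add_mem hx hy
    | mul x y _ _ hx hy =>
      obtain ⟨c, rfl⟩ := hx
      obtain ⟨d, rfl⟩ := hy
      exact ⟨_, (bicircMap_mul c d).symm⟩
  · have hA : Acirc n F ∈ Algebra.adjoin F {Acirc n F, Bcirc n F} :=
      Algebra.subset_adjoin (by simp)
    have hB : Bcirc n F ∈ Algebra.adjoin F {Acirc n F, Bcirc n F} :=
      Algebra.subset_adjoin (by simp)
    -- Powers of `A_n` are the elementary circulants; `B_n` turns circulants into anti-circulants.
    have hstep : ∀ m : ℕ, Acirc n F ^ m = bicircMap F n (Pi.single (-(m : Fin n)) 1, 0) := by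
      intro m
      induction m with
      | zero => simp [one_eq_bicircMap]
      | succ m ih =>
        rw [pow_succ', ih, Acirc_mul]
        congr 1
        refine Prod.ext ?_ ?_
        · ext x
          simp [Pi.single_apply, ← eq_sub_iff_add_eq, sub_eq_add_neg, add_comm]
        · ext x; simp
    have hcirc : ∀ c : Fin n → F,
        bicircMap F n (c, 0) ∈ Algebra.adjoin F {Acirc n F, Bcirc n F} := by
      intro c
      have : bicircMap F n (c, 0) = ∑ k, c k • Acirc n F ^ ((-k : Fin n) : ℕ) := by
        simp only [hstep, Fin.cast_val_eq_self, neg_neg, ← map_smul, ← map_sum]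
        congr 1
        refine Prod.ext ?_ ?_
        · ext x; simp [Prod.fst_sum, Pi.single_apply]
        · ext x; simp [Prod.snd_sum]
      rw [this]
      exact sum_mem fun k _ => Subalgebra.smul_mem _ (pow_mem hA _) _
    rintro _ ⟨⟨c, d⟩, rfl⟩
    have : bicircMap F n (c, d) =
        bicircMap F n (c, 0) + bicircMap F n (fun x => d (x - 1), 0) * Bcirc n F := by
      rw [mul_Bcirc, ← map_add]
      congr 1
      refine Prod.ext ?_ ?_ <;> ext x <;> simp
    rw [Subalgebra.mem_toSubmodule, this]
    exact add_mem (hcirc c) (mul_mem (hcirc _) hB)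

lemma one_le_finrank_ker : 1 ≤ finrank F (LinearMap.ker (bicircMap F n)) := by
  rw [Nat.one_le_iff_ne_zero, Ne, Submodule.finrank_eq_zero]
  intro h
  have hmem : ((fun _ => 1, fun _ => -1) : (Fin n → F) × (Fin n → F)) ∈
      LinearMap.ker (bicircMap F n) := by
    rw [LinearMap.mem_ker]
    ext i j
    simp [bicircMap_apply]
  rw [h, Submodule.mem_bot] at hmem
  have := congrFun (congrArg Prod.fst hmem) 0
  simp at this

open Fin.CommRing in
/-- A pair `(c, d)` in the kernel has `d (x + 2) = -c x = d x`, so it is determined by `d 0` and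
`d 1`. -/
lemma finrank_ker_le : finrank F (LinearMap.ker (bicircMap F n)) ≤ 2 := by
  let e : LinearMap.ker (bicircMap F n) →ₗ[F] F × F :=
    ((LinearMap.proj (R := F) (φ := fun _ : Fin n => F) 0).prod (LinearMap.proj 1)) ∘ₗ
      (LinearMap.snd F (Fin n → F) (Fin n → F)) ∘ₗ (Submodule.subtype _)
  have he : Function.Injective e := by
    rw [injective_iff_map_eq_zero]
    rintro ⟨⟨c, d⟩, hcd⟩ h0
    have h0' : d 0 = 0 ∧ d 1 = 0 := by simpa [e] using h0
    have hz : bicircMap F n (c, d) = 0 := LinearMap.mem_ker.1 hcd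
    have hker : ∀ i j, c (i - j) + d (i + j) = 0 := fun i j => congrFun (congrFun hz i) j
    have hd2 : ∀ x, d (x + 1 + 1) = d x := fun x => by
      have h1 := hker (x + 1) 1
      have h2 := hker x 0
      rw [add_sub_cancel_right] at h1
      rw [sub_zero, add_zero] at h2
      exact add_left_cancel (h1.trans h2.symm)
    have hd : ∀ m : ℕ, d (m : Fin n) = 0 ∧ d ((m : Fin n) + 1) = 0 := by
      intro m
      induction m with
      | zero => simpa using h0'
      | succ m ih =>
        rw [Nat.cast_succ, hd2]
        exact ⟨ih.2, ih.1⟩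
    have hd0 : d = 0 := by
      ext x
      simpa using (hd (x : ℕ)).1
    have hc0 : c = 0 := by
      ext x
      simpa [hd0] using hker x 0
    simp [hc0, hd0]
  simpa using LinearMap.finrank_le_finrank_of_injective he

variable (F n) in
lemma finrank_bicirculant :
    finrank F ↥(Algebra.adjoin F {Acirc n F, Bcirc n F}) ≤ 2 * n - 1 ∧
    2 * n - 2 ≤ finrank F ↥(Algebra.adjoin F {Acirc n F, Bcirc n F}) := by
  have h1 : finrank F ↥(Algebra.adjoin F {Acirc n F, Bcirc n F}) =
      finrank F (LinearMap.range (bicircMap F n)) := by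
    rw [← adjoin_eq_range]; rfl
  have h2 := LinearMap.finrank_range_add_finrank_ker (bicircMap F n)
  have h3 := finrank_ker_le (F := F) (n := n)
  have h4 := one_le_finrank_ker (F := F) (n := n)
  rw [finrank_prod, finrank_fintype_fun_eq_card, Fintype.card_fin] at h2
  omega

end bicirculant

theorem stmt_6 (F : Type*) [Field F] (n : ℕ) (hn : 3 ≤ n) :
    (∀ S : Set ↥(Algebra.adjoin F ({Acirc n F, Bcirc n F} : Set (Matrix (Fin n) (Fin n) F))),
        Algebra.adjoin F S = ⊤ → lenS F S ≤ n - 1) ∧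
    ∃ S : Set ↥(Algebra.adjoin F ({Acirc n F, Bcirc n F} : Set (Matrix (Fin n) (Fin n) F))),
        Algebra.adjoin F S = ⊤ ∧ lenS F S = n - 1 := by
  have hnz : NeZero n := ⟨by omega⟩
  have hup : ∀ S : Set
      ↥(Algebra.adjoin F ({Acirc n F, Bcirc n F} : Set (Matrix (Fin n) (Fin n) F))),
      Algebra.adjoin F S = ⊤ → Lk F S (n - 1) = ⊤ := by
    intro S hS
    have h1 : 1 ≤ Submodule.span F ({1} ∪ S) :=
      Submodule.one_le.2 (Submodule.subset_span (by simp))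
    refine pow_eq_top_of_adjoin hS (pow_succ_le_of_finrank h1 ?_ fun s hs => ?_)
    · have := (finrank_bicirculant F n).1
      omega
    · refine pow_mem_of_monic h1 hs (Matrix.charpoly_monic (s : Matrix (Fin n) (Fin n) F)) ?_ ?_
      · rw [Matrix.charpoly_natDegree_eq_dim, Fintype.card_fin]
        omega
      · apply Subtype.val_injective
        exact (Polynomial.aeval_subalgebra_coe _ _ s).trans (Matrix.aeval_self_charpoly _)
  refine ⟨fun S hS => Nat.sInf_le (hup S hS), ?_⟩
  have hA : Acirc n F ∈ Algebra.adjoin F {Acirc n F, Bcirc n F} :=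
    Algebra.subset_adjoin (by simp)
  have hB : Bcirc n F ∈ Algebra.adjoin F {Acirc n F, Bcirc n F} :=
    Algebra.subset_adjoin (by simp)
  -- The witness consists of the two involutions `A_n B_n` and `B_n`.
  let b : ↥(Algebra.adjoin F {Acirc n F, Bcirc n F}) := ⟨Bcirc n F, hB⟩
  let a : ↥(Algebra.adjoin F {Acirc n F, Bcirc n F}) := ⟨Acirc n F * Bcirc n F, mul_mem hA hB⟩
  have hb : b * b = 1 := Subtype.ext Bcirc_mul_self
  have ha : a * a = 1 := Subtype.ext AB_mul_self
  have hgen : Algebra.adjoin F {a, b} = ⊤ := by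
    have ha' : a ∈ Algebra.adjoin F {a, b} := Algebra.subset_adjoin (by simp)
    have hb' : b ∈ Algebra.adjoin F {a, b} := Algebra.subset_adjoin (by simp)
    have hab : ((a * b : ↥(Algebra.adjoin F {Acirc n F, Bcirc n F})) : Matrix _ _ F) =
        Acirc n F := by
      simp only [a, b, MulMemClass.mk_mul_mk, mul_assoc, Bcirc_mul_self, mul_one]
    have hle : Algebra.adjoin F {Acirc n F, Bcirc n F} ≤
        (Algebra.adjoin F {a, b}).map (Subalgebra.val _) := by
      rw [Algebra.adjoin_le_iff]
      rintro x (rfl | rfl)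
      · exact ⟨a * b, mul_mem ha' hb', hab⟩
      · exact ⟨b, hb', rfl⟩
    rw [eq_top_iff]
    rintro x -
    obtain ⟨y, hy, hyx⟩ := hle x.2
    rwa [← Subtype.val_injective hyx]
  refine ⟨{a, b}, hgen, le_antisymm (Nat.sInf_le (hup _ hgen)) ?_⟩
  have htop : Lk F {a, b} (lenS F {a, b}) = ⊤ :=
    Nat.sInf_mem (s := {k | Lk F {a, b} k = ⊤}) ⟨n - 1, hup _ hgen⟩
  have h1 := finrank_pow_le_of_involutions (F := F) ha hb (lenS F {a, b})
  rw [Lk] at htop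
  rw [htop, finrank_top] at h1
  have h2 := (finrank_bicirculant F n).2
  omega
end

section
/- Let F be an arbitrary field and n ≥ 4 even. Then the length of the group algebra F D_n of the dihedral group of order 2n equals n or n + 1; precisely, every generating set S of F D_n satisfies l(S) ≤ n + 1, and there exists a generating set with l(S) ≥ n. -/
/-! ### Growth of the word-length filtration -/

section Filtration
variable {F A : Type*} [Field F] [Ring A] [Algebra F A]

/-- Once one step of the filtration `V ^ k` is spanned by the power of an element `x` of `V`, so is the
next one: `v * x ^ (k + 1) = (v * x ^ k) * x`, and `v * x ^ k` reduces to a multiple of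
`x ^ (k + 1)` modulo `V ^ k`. -/
theorem pow_le_sup_step {V : Submodule F A} {x : A} (hx : x ∈ V) {k : ℕ}
    (h : V ^ (k + 1) ≤ V ^ k ⊔ Submodule.span F {x ^ (k + 1)}) :
    V ^ (k + 2) ≤ V ^ (k + 1) ⊔ Submodule.span F {x ^ (k + 2)} := by
  rw [pow_succ' V (k + 1), Submodule.mul_le]
  intro v hv y hy
  obtain ⟨u, hu, s, hs, rfl⟩ := Submodule.mem_sup.1 (h hy)
  obtain ⟨c, rfl⟩ := Submodule.mem_span_singleton.1 hs
  have hvx : v * x ^ k ∈ V ^ (k + 1) := by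
    rw [pow_succ']
    exact Submodule.mul_mem_mul hv (Submodule.pow_mem_pow V hx k)
  obtain ⟨u', hu', s', hs', he⟩ := Submodule.mem_sup.1 (h hvx)
  obtain ⟨c', rfl⟩ := Submodule.mem_span_singleton.1 hs'
  have hkey : v * (u + c • x ^ (k + 1)) = (v * u + c • (u' * x)) + (c * c') • x ^ (k + 2) := by
    have h1 : v * x ^ (k + 1) = (u' + c' • x ^ (k + 1)) * x := by
      rw [he, pow_succ, mul_assoc]
    rw [mul_add, mul_smul_comm, h1, add_mul, smul_add, smul_mul_assoc, ← pow_succ, smul_smul,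
      ← add_assoc]
  rw [hkey]
  refine Submodule.add_mem_sup (add_mem ?_ (Submodule.smul_mem _ _ ?_))
    (Submodule.smul_mem _ _ (Submodule.mem_span_singleton_self _))
  · rw [pow_succ']; exact Submodule.mul_mem_mul hv hu
  · rw [pow_succ]; exact Submodule.mul_mem_mul hu' hx

/-- If `V ^ (k + 1) / V ^ k` is a line and the filtration still grows afterwards, then the line is
spanned by `x ^ (k + 1)` for some `x ∈ V`.

Let `φ` be a functional killing `V ^ k` with `φ w ≠ 0`, and `f` one killing `V ^ (k + 1)` but not
`V ^ (k + 2)`. For `v, z ∈ V` and `u ∈ V ^ k`, evaluating `f (v * u * z)` in two ways gives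
`φ (u * z) * f (v * w) = φ (v * u) * f (w * z)`. Hence if `f (x * w) ≠ 0` and `φ (u * z) ≠ 0`, then
`φ (x * u) ≠ 0`: the letters of a product not killed by `φ` can be traded one by one for `x`. -/
theorem exists_pow_of_rank_one_step {V : Submodule F A} {k : ℕ} {w : A}
    (hw : w ∉ V ^ k) (hwk : w ∈ V ^ (k + 1))
    (h : V ^ (k + 1) ≤ V ^ k ⊔ Submodule.span F {w})
    (hne : ¬ V ^ (k + 2) ≤ V ^ (k + 1)) :
    ∃ x ∈ V, V ^ (k + 1) ≤ V ^ k ⊔ Submodule.span F {x ^ (k + 1)} := by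
  obtain ⟨φ, hφw, hφ⟩ := Submodule.exists_le_ker_of_notMem hw
  obtain ⟨z, hz, hzn⟩ := SetLike.not_le_iff_exists.1 hne
  obtain ⟨f, hfz, hf⟩ := Submodule.exists_le_ker_of_notMem hzn
  -- every element of `V ^ (k + 1)` is a multiple of `w` modulo `V ^ k`, the multiple being
  -- detected by `φ`
  have hdec : ∀ y ∈ V ^ (k + 1), ∃ u ∈ V ^ k, ∃ c : F, y = u + c • w ∧ φ y = c * φ w := by
    intro y hy
    obtain ⟨u, hu, s, hs, rfl⟩ := Submodule.mem_sup.1 (h hy)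
    obtain ⟨c, rfl⟩ := Submodule.mem_span_singleton.1 hs
    refine ⟨u, hu, c, rfl, ?_⟩
    have : φ u = 0 := hφ hu
    simp [this]
  have hL : ∀ v ∈ V, ∀ y ∈ V ^ (k + 1), φ w * f (v * y) = φ y * f (v * w) := by
    intro v hv y hy
    obtain ⟨u, hu, c, rfl, hc⟩ := hdec y hy
    have : f (v * u) = 0 := hf (by rw [pow_succ']; exact Submodule.mul_mem_mul hv hu)
    rw [hc, mul_add, map_add, this, mul_smul_comm, map_smul, smul_eq_mul]; ring
  have hR : ∀ v ∈ V, ∀ y ∈ V ^ (k + 1), φ w * f (y * v) = φ y * f (w * v) := by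
    intro v hv y hy
    obtain ⟨u, hu, c, rfl, hc⟩ := hdec y hy
    have : f (u * v) = 0 := hf (by rw [pow_succ]; exact Submodule.mul_mem_mul hu hv)
    rw [hc, add_mul, map_add, this, smul_mul_assoc, map_smul, smul_eq_mul]; ring
  obtain ⟨x, hx, hxw⟩ : ∃ x ∈ V, f (x * w) ≠ 0 := by
    by_contra! hcon
    apply hfz
    have : V ^ (k + 2) ≤ LinearMap.ker f := by
      rw [pow_succ' V (k + 1), Submodule.mul_le]
      intro v hv y hy
      have := hL v hv y hy
      rw [hcon v hv, mul_zero] at this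
      exact (mul_eq_zero.1 this).resolve_left hφw
    exact this hz
  -- letters may be moved out on the right and replaced by `x` on the left
  have hP : ∀ i ≤ k + 1, ∃ y ∈ V ^ (k + 1 - i), φ (x ^ i * y) ≠ 0 := by
    intro i
    induction i with
    | zero => intro _; exact ⟨w, by simpa using hwk, by simpa using hφw⟩
    | succ i ih =>
      intro hi
      obtain ⟨y, hy, hφy⟩ := ih (by omega)
      by_contra! hcon
      apply hφy
      have hle : V ^ (k + 1 - i) ≤ LinearMap.ker (φ ∘ₗ LinearMap.mulLeft F (x ^ i)) := by
        rw [show k + 1 - i = (k - i) + 1 by omega, pow_succ, Submodule.mul_le]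
        intro u hu v hv
        have h1 : x ^ i * u ∈ V ^ k := by
          have := Submodule.mul_mem_mul (Submodule.pow_mem_pow V hx i) hu
          rwa [← pow_add, show i + (k - i) = k by omega] at this
        have h2 : φ (x ^ (i + 1) * u) = 0 := hcon u (by simpa using hu)
        have h3 := hL x hx (x ^ i * u * v) (by rw [pow_succ]; exact Submodule.mul_mem_mul h1 hv)
        have h4 := hR v hv (x * (x ^ i * u))
          (by rw [pow_succ']; exact Submodule.mul_mem_mul hx h1)
        rw [← mul_assoc x, ← pow_succ', h2, zero_mul] at h4
        rw [← mul_assoc x, ← mul_assoc x, ← pow_succ', h4] at h3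
        have := (mul_eq_zero.1 h3.symm).resolve_right hxw
        simpa [mul_assoc] using this
      exact hle hy
  obtain ⟨y, hy, hφy⟩ := hP (k + 1) le_rfl
  rw [Nat.sub_self, pow_zero, Submodule.one_eq_span, Submodule.mem_span_singleton] at hy
  obtain ⟨c, rfl⟩ := hy
  have hφx : φ (x ^ (k + 1)) ≠ 0 := by
    intro h0; apply hφy; simp [h0]
  obtain ⟨u, hu, c', he, hc'⟩ := hdec _ (Submodule.pow_mem_pow V hx (k + 1))
  have hc0 : c' ≠ 0 := by rintro rfl; simp [hc'] at hφx
  refine ⟨x, hx, h.trans (sup_le le_sup_left ?_)⟩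
  rw [Submodule.span_singleton_le_iff_mem]
  have : w = -(c'⁻¹ • u) + c'⁻¹ • x ^ (k + 1) := by
    rw [he, smul_add, smul_smul, inv_mul_cancel₀ hc0, one_smul]; abel
  rw [this]
  exact Submodule.add_mem_sup (neg_mem (Submodule.smul_mem _ _ hu))
    (Submodule.smul_mem _ _ (Submodule.mem_span_singleton_self _))

/-- For a generating set the filtration by word length is strictly increasing until it reaches the
whole algebra. -/
theorem eq_top_of_pow_step {S : Set A} (hS : Algebra.adjoin F S = ⊤) {k : ℕ}
    (h : (Submodule.span F ({1} ∪ S)) ^ (k + 1) ≤ (Submodule.span F ({1} ∪ S)) ^ k) :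
    (Submodule.span F ({1} ∪ S)) ^ k = ⊤ := by
  set V := Submodule.span F ({1} ∪ S) with hV
  have h1 : (1 : A) ∈ V := Submodule.subset_span (by simp)
  rw [eq_top_iff, ← Algebra.top_toSubmodule, ← hS, Algebra.adjoin_eq_span, Submodule.span_le]
  intro y hy
  have : (1 : A) * y ∈ V ^ k → y ∈ V ^ k := by simp
  have key : ∀ y ∈ Submonoid.closure S, ∀ u ∈ V ^ k, u * y ∈ V ^ k := by
    intro y hy
    induction hy using Submonoid.closure_induction with
    | mem s hs =>
      intro u hu
      exact h (by rw [pow_succ]; exact Submodule.mul_mem_mul hu (Submodule.subset_span (by simp [hs])))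
    | one => simp
    | mul a b _ _ iha ihb => intro u hu; rw [← mul_assoc]; exact ihb _ (iha _ hu)
  refine this (key y hy 1 ?_)
  simpa using Submodule.pow_mem_pow V h1 k

/-- A bound for the length of a generating set by the degrees of minimal polynomials: if
`dim A ≤ 2 * m` and every minimal polynomial has degree at most `m + 1`, then words of length `m`
span `A`. Otherwise some step up to `m` has rank one, since ranks at least two would exceed `dim A`;
from then on the filtration grows only by powers of a single `x`, and `x ^ (m + 1)` is redundant. -/
theorem pow_eq_top_of_natDegree_minpoly_le [FiniteDimensional F A] {S : Set A}
    (hS : Algebra.adjoin F S = ⊤) {m : ℕ} (hdim : Module.finrank F A < 2 * m + 1)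
    (hm : ∀ x : A, (minpoly F x).natDegree ≤ m + 1) :
    (Submodule.span F ({1} ∪ S)) ^ m = ⊤ := by
  by_contra htop
  set V := Submodule.span F ({1} ∪ S) with hV
  have h1 : (1 : A) ∈ V := Submodule.subset_span (by simp)
  have hmono : Monotone (fun k => V ^ k) := monotone_nat_of_le_succ fun k y hy => by
    rw [pow_succ, ← mul_one y]
    exact Submodule.mul_mem_mul hy h1
  have hstep : ∀ k ≤ m, ¬ V ^ (k + 1) ≤ V ^ k := fun k hk hle =>
    htop (top_le_iff.1 ((eq_top_of_pow_step hS hle).ge.trans (hmono hk)))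
  have hnt : Nontrivial A := by
    by_contra hn
    rw [not_nontrivial_iff_subsingleton] at hn
    exact htop (Subsingleton.elim _ _)
  obtain ⟨k, hk, hrank⟩ : ∃ k < m, Module.finrank F ↥(V ^ (k + 1)) ≤ Module.finrank F ↥(V ^ k) + 1 := by
    by_contra! hcon
    have hgrow : ∀ k ≤ m, 2 * k + 1 ≤ Module.finrank F ↥(V ^ k) := by
      intro k
      induction k with
      | zero =>
        intro _
        have h0 : V ^ 0 ≠ ⊥ := by
          rw [pow_zero, Submodule.one_eq_span]; simp
        exact Submodule.one_le_finrank_iff.2 h0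
      | succ k ih =>
        intro hk
        have := hcon k (by omega)
        have := ih (by omega)
        omega
    have := hgrow m le_rfl
    have := Submodule.finrank_le (V ^ m)
    omega
  obtain ⟨w, hwk, hw⟩ := SetLike.not_le_iff_exists.1 (hstep k hk.le)
  have hsup : V ^ (k + 1) ≤ V ^ k ⊔ Submodule.span F {w} := by
    have hle : V ^ k ⊔ Submodule.span F {w} ≤ V ^ (k + 1) :=
      sup_le (hmono (Nat.le_succ k)) ((Submodule.span_singleton_le_iff_mem _ _).2 hwk)
    have hlt : V ^ k < V ^ k ⊔ Submodule.span F {w} := by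
      refine lt_of_le_not_ge le_sup_left fun hge => hw ?_
      exact hge (Submodule.mem_sup_right (Submodule.mem_span_singleton_self w))
    have := Submodule.finrank_lt_finrank_of_lt hlt
    exact (Submodule.eq_of_le_of_finrank_le hle (by omega)).ge
  obtain ⟨x, hx, hxk⟩ := exists_pow_of_rank_one_step hw hwk hsup (hstep (k + 1) hk)
  have hall : ∀ j, k ≤ j → V ^ (j + 1) ≤ V ^ j ⊔ Submodule.span F {x ^ (j + 1)} := by
    intro j hj
    induction j, hj using Nat.le_induction with
    | base => exact hxk
    | succ j _ ih => exact pow_le_sup_step hx ih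
  refine hstep m le_rfl ((hall m hk.le).trans (sup_le le_rfl ?_))
  rw [Submodule.span_singleton_le_iff_mem]
  -- `x ^ (m + 1)` reduces modulo the minimal polynomial of `x`
  have hint : IsIntegral F x := Algebra.IsIntegral.isIntegral x
  set p : Polynomial F := minpoly F x * Polynomial.X ^ (m + 1 - (minpoly F x).natDegree) with hp
  have hpm : p.Monic := (minpoly.monic hint).mul (Polynomial.monic_X_pow _)
  have hpd : p.natDegree = m + 1 := by
    rw [hp, (minpoly.monic hint).natDegree_mul (Polynomial.monic_X_pow _),
      Polynomial.natDegree_X_pow]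
    have := hm x
    omega
  have hp0 : Polynomial.aeval x p = 0 := by rw [hp, map_mul, minpoly.aeval, zero_mul]
  rw [hpm.as_sum, hpd] at hp0
  simp only [map_add, map_pow, Polynomial.aeval_X, map_sum, map_mul, Polynomial.aeval_C] at hp0
  rw [eq_neg_of_add_eq_zero_left hp0]
  refine neg_mem (sum_mem fun i hi => ?_)
  rw [← Algebra.smul_def]
  refine Submodule.smul_mem _ _ (hmono (Finset.mem_range_succ_iff.1 hi) ?_)
  exact Submodule.pow_mem_pow V hx i

end Filtration

/-! ### Minimal polynomials in the dihedral group algebra -/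

section Dihedral
variable (F : Type*) [Field F] (n : ℕ)

/-- The inclusion `F[C_n] → F[D_n]` of the group algebra of the rotation subgroup. -/
noncomputable def rotHom :
    MonoidAlgebra F (Multiplicative (ZMod n)) →ₐ[F] MonoidAlgebra F (DihedralGroup n) :=
  MonoidAlgebra.mapDomainAlgHom F F
    { toFun := fun i => DihedralGroup.r i.toAdd
      map_one' := rfl
      map_mul' := fun _ _ => rfl }

/-- The involution `a ↦ a⁻¹` of `F[C_n]`. -/
noncomputable def rotInv :
    MonoidAlgebra F (Multiplicative (ZMod n)) ≃ₐ[F] MonoidAlgebra F (Multiplicative (ZMod n)) :=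
  MonoidAlgebra.domCongr F F (MulEquiv.inv _)

theorem rotHom_single (i : ZMod n) (c : F) :
    rotHom F n (MonoidAlgebra.single (Multiplicative.ofAdd i) c) =
      MonoidAlgebra.single (DihedralGroup.r i) c := by
  simp [rotHom]
  rfl

theorem rotInv_single (i : ZMod n) (c : F) :
    rotInv F n (MonoidAlgebra.single (Multiplicative.ofAdd i) c) =
      MonoidAlgebra.single (Multiplicative.ofAdd (-i)) c := by
  simp [rotInv]

theorem rotInv_rotInv (p : MonoidAlgebra F (Multiplicative (ZMod n))) :
    rotInv F n (rotInv F n p) = p := by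
  ext; simp [rotInv]

theorem reflection_mul_rotHom (p : MonoidAlgebra F (Multiplicative (ZMod n))) :
    MonoidAlgebra.single (DihedralGroup.sr 0) 1 * rotHom F n p =
      rotHom F n (rotInv F n p) * MonoidAlgebra.single (DihedralGroup.sr 0) 1 := by
  induction p using MonoidAlgebra.induction_linear with
  | zero => simp
  | add p q hp hq => simp only [map_add, mul_add, add_mul, hp, hq]
  | single i c =>
    have h1 := rotHom_single F n i.toAdd c
    have h2 := rotInv_single F n i.toAdd c
    rw [ofAdd_toAdd] at h1 h2
    rw [h1, h2, rotHom_single]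
    simp [MonoidAlgebra.single_mul_single]

theorem exists_rotHom_add_rotHom_mul (x : MonoidAlgebra F (DihedralGroup n)) :
    ∃ p q, x = rotHom F n p + rotHom F n q * MonoidAlgebra.single (DihedralGroup.sr 0) 1 := by
  induction x using MonoidAlgebra.induction_linear with
  | zero => exact ⟨0, 0, by simp⟩
  | add x y hx hy =>
    obtain ⟨p, q, rfl⟩ := hx
    obtain ⟨p', q', rfl⟩ := hy
    refine ⟨p + p', q + q', ?_⟩
    simp only [map_add, add_mul]
    abel
  | single g c =>
    cases g with
    | r i =>
      exact ⟨MonoidAlgebra.single (Multiplicative.ofAdd i) c, 0, by simp [rotHom_single]⟩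
    | sr i =>
      refine ⟨0, MonoidAlgebra.single (Multiplicative.ofAdd (-i)) c, ?_⟩
      rw [rotHom_single, MonoidAlgebra.single_mul_single]
      simp

/-- The subalgebra `F[C_n]^σ` of invariants of `a ↦ a⁻¹`; its image in `F[D_n]` is central. -/
noncomputable def rotFixed : Subalgebra F (MonoidAlgebra F (Multiplicative (ZMod n))) :=
  AlgHom.equalizer (rotInv F n : _ →ₐ[F] _) (AlgHom.id F _)

theorem mem_rotFixed {p : MonoidAlgebra F (Multiplicative (ZMod n))} :
    p ∈ rotFixed F n ↔ rotInv F n p = p := Iff.rfl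

/-- An invariant element is determined by its coefficients at `a ^ i` with `0 ≤ i ≤ n / 2`. -/
theorem finrank_rotFixed_le [NeZero n] : Module.finrank F (rotFixed F n) ≤ n / 2 + 1 := by
  let ev : rotFixed F n →ₗ[F] (Fin (n / 2 + 1) → F) :=
    { toFun := fun p i => p.1.coeff (Multiplicative.ofAdd ((i : ℕ) : ZMod n))
      map_add' := fun _ _ => rfl
      map_smul' := fun _ _ => rfl }
  have hinj : Function.Injective ev := by
    rw [injective_iff_map_eq_zero]
    rintro ⟨p, hp⟩ h0
    have hsymm : ∀ i : ZMod n, p.coeff (Multiplicative.ofAdd (-i)) =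
        p.coeff (Multiplicative.ofAdd i) := by
      intro i
      conv_rhs => rw [← (mem_rotFixed F n).1 hp]
      simp [rotInv]
    have hsmall : ∀ k : ℕ, k ≤ n / 2 → p.coeff (Multiplicative.ofAdd ((k : ℕ) : ZMod n)) = 0 :=
      fun k hk => congrFun h0 ⟨k, by omega⟩
    apply Subtype.ext
    change p = 0
    ext i
    change p.coeff (Multiplicative.ofAdd i.toAdd) = 0
    generalize i.toAdd = j
    by_cases hj : j.val ≤ n / 2
    · simpa using hsmall _ hj
    · have hlt := ZMod.val_lt j
      have h := hsmall (n - j.val) (by omega)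
      rw [Nat.cast_sub hlt.le] at h
      rw [← hsymm]
      simpa using h
  simpa using LinearMap.finrank_le_finrank_of_injective hinj

/-- Writing `x = p + q * b`, the element `x` satisfies `x ^ 2 = t * x - N` with `t = p + σ p` and
`N = p * σ p - q * σ q` in `F[C_n]^σ`. So all powers of `x` lie in `F[C_n]^σ + F[C_n]^σ * x`, whose
dimension is at most twice that of `F[C_n]^σ`. -/
theorem natDegree_minpoly_le [NeZero n] (x : MonoidAlgebra F (DihedralGroup n)) :
    (minpoly F x).natDegree ≤ 2 * (n / 2 + 1) := by
  obtain ⟨p, q, hx⟩ := exists_rotHom_add_rotHom_mul F n x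
  set b : MonoidAlgebra F (DihedralGroup n) := MonoidAlgebra.single (DihedralGroup.sr 0) 1 with hb
  have hbb : b * b = 1 := by
    rw [hb, MonoidAlgebra.single_mul_single]; simp [MonoidAlgebra.one_def]
  have hcomm := reflection_mul_rotHom F n
  rw [← hb] at hcomm
  set σ := rotInv F n with hσ
  -- the trace and minus the norm of `x` over the invariants
  have ht : p + σ p ∈ rotFixed F n := by
    rw [mem_rotFixed, map_add, ← hσ, hσ, rotInv_rotInv, add_comm]
  have hN : q * σ q - p * σ p ∈ rotFixed F n := by
    rw [mem_rotFixed, map_sub, map_mul, map_mul, hσ, rotInv_rotInv, rotInv_rotInv, mul_comm,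
      mul_comm (rotInv F n p)]
  have hquad : x * x = rotHom F n (p + σ p) * x + rotHom F n (q * σ q - p * σ p) := by
    have e1 : x * x = rotHom F n (p * p + q * σ q) + rotHom F n (p * q + q * σ p) * b := by
      have e2 : rotHom F n q * b * (rotHom F n q * b) = rotHom F n (q * σ q) := by
        rw [mul_assoc, ← mul_assoc b, hcomm, mul_assoc, hbb, mul_one, map_mul]
      have e3 : rotHom F n q * b * rotHom F n p = rotHom F n (q * σ p) * b := by
        rw [mul_assoc, hcomm, ← mul_assoc, map_mul]
      rw [hx, add_mul, mul_add, mul_add, e2, e3, ← mul_assoc]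
      simp only [map_add, map_mul, add_mul]
      abel
    rw [e1, hx, mul_add, ← mul_assoc, ← map_mul, ← map_mul, add_right_comm, ← map_add]
    congr 2
    · ring
    · congr 1; ring
  let g : (rotFixed F n × rotFixed F n) →ₗ[F] MonoidAlgebra F (DihedralGroup n) :=
    LinearMap.coprod ((rotHom F n).toLinearMap ∘ₗ (rotFixed F n).val.toLinearMap)
      (LinearMap.mulRight F x ∘ₗ (rotHom F n).toLinearMap ∘ₗ (rotFixed F n).val.toLinearMap)
  have hg : ∀ u v, g (u, v) = rotHom F n u + rotHom F n v * x := fun u v => rfl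
  have hpow : ∀ j : ℕ, x ^ j ∈ LinearMap.range g := by
    intro j
    induction j with
    | zero => exact ⟨(1, 0), by simp [hg]⟩
    | succ j ih =>
      obtain ⟨⟨u, v⟩, he⟩ := ih
      refine ⟨(v * ⟨_, hN⟩, u + v * ⟨_, ht⟩), ?_⟩
      rw [pow_succ, ← he, hg, hg, add_mul, mul_assoc, hquad]
      simp only [MulMemClass.coe_mul, AddMemClass.coe_add, map_add, map_mul, mul_add, add_mul, mul_assoc]
      abel
  have hli := linearIndependent_pow (K := F) x
  have hli' : LinearIndependent F
      (fun i : Fin (minpoly F x).natDegree => (⟨x ^ (i : ℕ), hpow i⟩ : LinearMap.range g)) :=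
    LinearIndependent.of_comp (LinearMap.range g).subtype hli
  have h1 := hli'.fintype_card_le_finrank
  have h2 := LinearMap.finrank_range_le g
  rw [Module.finrank_prod] at h2
  have h3 := finrank_rotFixed_le F n
  simp only [Fintype.card_fin] at h1
  omega

/-! ### Word length in two reflections -/

/-- The elements of `D_n` whose length in the reflections `sr 0`, `sr 1` is at most `k`, for the
length function giving `r j` the value `|2j|` and `sr j` the value `|2j - 1|`, minimised over the
integer representatives `j` of the residue class. -/
def shortWords (k : ℕ) : Set (DihedralGroup n)
  | .r i => ∃ j : ℤ, (j : ZMod n) = i ∧ |2 * j| ≤ k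
  | .sr i => ∃ j : ℤ, (j : ZMod n) = i ∧ |2 * j - 1| ≤ k

/-- The two reflections `sr 0`, `sr 1` (Coxeter generators) as elements of `F[D_n]`. -/
noncomputable def coxeterGens : Set (MonoidAlgebra F (DihedralGroup n)) :=
  {MonoidAlgebra.of F _ (DihedralGroup.sr 0), MonoidAlgebra.of F _ (DihedralGroup.sr 1)}

theorem adjoin_coxeterGens [NeZero n] : Algebra.adjoin F (coxeterGens F n) = ⊤ := by
  set B := Algebra.adjoin F (coxeterGens F n) with hB
  have h0 : MonoidAlgebra.of F _ (DihedralGroup.sr (0 : ZMod n)) ∈ B :=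
    Algebra.subset_adjoin (by simp [coxeterGens])
  have h1 : MonoidAlgebra.of F _ (DihedralGroup.sr (1 : ZMod n)) ∈ B :=
    Algebra.subset_adjoin (by simp [coxeterGens])
  have hr : ∀ i : ZMod n, MonoidAlgebra.of F _ (DihedralGroup.r i) ∈ B := by
    intro i
    have := pow_mem (mul_mem h0 h1) i.val
    rw [← map_mul, ← map_pow, DihedralGroup.sr_mul_sr, sub_zero, DihedralGroup.r_one_pow] at this
    simpa using this
  have hall : ∀ g : DihedralGroup n, MonoidAlgebra.of F _ g ∈ B := by
    intro g
    cases g with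
    | r i => exact hr i
    | sr i =>
      have := mul_mem h0 (hr i)
      rwa [← map_mul, DihedralGroup.sr_mul_r, zero_add] at this
  rw [eq_top_iff]
  intro x _
  induction x using MonoidAlgebra.induction_linear with
  | zero => exact zero_mem _
  | add x y hx hy => exact add_mem (hx trivial) (hy trivial)
  | single g c =>
    have := B.smul_mem (hall g) c
    simpa using this

theorem span_coxeterGens_pow_le (k : ℕ) :
    (Submodule.span F ({1} ∪ coxeterGens F n)) ^ k ≤
      Submodule.span F (MonoidAlgebra.of F (DihedralGroup n) '' shortWords n k) := by
  induction k with
  | zero =>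
    rw [pow_zero, Submodule.one_eq_span, Submodule.span_singleton_le_iff_mem]
    exact Submodule.subset_span ⟨1, ⟨0, by simp⟩, map_one _⟩
  | succ k ih =>
    rw [pow_succ]
    refine (mul_le_mul' ih le_rfl).trans ?_
    rw [Submodule.span_mul_span]
    refine Submodule.span_mono ?_
    rintro _ ⟨_, ⟨g, hg, rfl⟩, y, hy, rfl⟩
    have hy' : ∃ h : DihedralGroup n, (h = 1 ∨ h = .sr 0 ∨ h = .sr 1) ∧
        y = MonoidAlgebra.of F _ h := by
      rcases hy with hy | hy | hy
      · exact ⟨1, by simp, by rw [map_one]; exact hy⟩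
      · exact ⟨_, by simp, hy⟩
      · exact ⟨.sr 1, by simp, hy⟩
    obtain ⟨h, hh, rfl⟩ := hy'
    refine ⟨g * h, ?_, map_mul _ _ _⟩
    cases g with
    | r i =>
      obtain ⟨j, rfl, hj⟩ := hg
      rcases hh with rfl | rfl | rfl
      · rw [mul_one]; exact ⟨j, rfl, by push_cast; omega⟩
      · exact ⟨-j, by push_cast; ring, by push_cast; rw [abs_le] at *; omega⟩
      · exact ⟨1 - j, by push_cast; ring, by push_cast; rw [abs_le] at *; omega⟩
    | sr i =>
      obtain ⟨j, rfl, hj⟩ := hg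
      rcases hh with rfl | rfl | rfl
      · rw [mul_one]; exact ⟨j, rfl, by push_cast; omega⟩
      · exact ⟨-j, by push_cast; ring, by push_cast; rw [abs_le] at *; omega⟩
      · exact ⟨1 - j, by push_cast; ring, by push_cast; rw [abs_le] at *; omega⟩

/-- For `n = 2 * m` the rotation `r m` is the longest element: it is not a word of length less than
`n` in the two reflections. -/
theorem le_of_coxeterGens_pow_eq_top (heven : Even n) {k : ℕ}
    (h : (Submodule.span F ({1} ∪ coxeterGens F n)) ^ k = ⊤) : n ≤ k := by
  obtain ⟨m, hm⟩ := heven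
  by_contra! hk
  have hnot : DihedralGroup.r (m : ZMod n) ∉ shortWords n k := by
    rintro ⟨j, hj, hjk⟩
    have hdvd : (n : ℤ) ∣ j - m := by
      rw [← ZMod.intCast_zmod_eq_zero_iff_dvd]
      push_cast
      rw [hj, sub_self]
    obtain ⟨c, hc⟩ := hdvd
    rw [abs_le] at hjk
    subst hm
    push_cast at *
    have h1 : (m : ℤ) * (2 * c + 1) < m := by nlinarith
    have h2 : -(m : ℤ) < m * (2 * c + 1) := by nlinarith
    have hm0 : (0 : ℤ) < m := by omega
    have h3 : 2 * c + 1 < 1 := by nlinarith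
    have h4 : -1 < 2 * c + 1 := by nlinarith
    omega
  have hmem : MonoidAlgebra.of F _ (DihedralGroup.r (m : ZMod n)) ∈
      Submodule.span F (MonoidAlgebra.of F (DihedralGroup n) '' shortWords n k) :=
    span_coxeterGens_pow_le F n k (h ▸ Submodule.mem_top)
  let ev : MonoidAlgebra F (DihedralGroup n) →ₗ[F] F :=
    { toFun := fun z => z.coeff (DihedralGroup.r (m : ZMod n))
      map_add' := fun _ _ => rfl
      map_smul' := fun _ _ => rfl }
  have hle : Submodule.span F (MonoidAlgebra.of F (DihedralGroup n) '' shortWords n k) ≤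
      LinearMap.ker ev := by
    rw [Submodule.span_le]
    rintro _ ⟨g, hg, rfl⟩
    have hne : g ≠ DihedralGroup.r (m : ZMod n) := by rintro rfl; exact hnot hg
    change (MonoidAlgebra.single g (1 : F)).coeff _ = 0
    rw [MonoidAlgebra.coeff_single, Finsupp.single_eq_of_ne' hne]
  have h0 : (MonoidAlgebra.single (DihedralGroup.r (m : ZMod n)) (1 : F)).coeff
    (DihedralGroup.r (m : ZMod n)) = 0 := hle hmem
  simp at h0

end Dihedral

theorem stmt_13 (F : Type*) [Field F] (n : ℕ) (hn : 4 ≤ n) (heven : Even n) :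
    (∀ S : Set (MonoidAlgebra F (DihedralGroup n)),
        Algebra.adjoin F S = ⊤ → lenS F S ≤ n + 1) ∧
    ∃ S : Set (MonoidAlgebra F (DihedralGroup n)),
        Algebra.adjoin F S = ⊤ ∧ n ≤ lenS F S := by
  have : NeZero n := ⟨by omega⟩
  have htop : ∀ S : Set (MonoidAlgebra F (DihedralGroup n)),
      Algebra.adjoin F S = ⊤ → Lk F S (n + 1) = ⊤ := by
    intro S hS
    have hfin : FiniteDimensional F (MonoidAlgebra F (DihedralGroup n)) :=
      Module.Finite.equiv (MonoidAlgebra.coeffLinearEquiv F).symm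
    refine pow_eq_top_of_natDegree_minpoly_le hS ?_ fun x => ?_
    · rw [(MonoidAlgebra.coeffLinearEquiv F).finrank_eq, Module.finrank_finsupp_self,
        DihedralGroup.card]
      omega
    · have := natDegree_minpoly_le F n x
      obtain ⟨m, rfl⟩ := heven
      omega
  refine ⟨fun S hS => Nat.sInf_le (htop S hS), coxeterGens F n, adjoin_coxeterGens F n, ?_⟩
  -- without nonemptiness the infimum would be the junk value `0`
  exact le_csInf ⟨n + 1, htop _ (adjoin_coxeterGens F n)⟩
    fun k hk => le_of_coxeterGens_pow_eq_top F n heven hk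
end

section
/- Let F be an arbitrary field and n ≥ 3 odd. Then m(F D_n) ≤ n + 1; that is, every element τ of the group algebra F D_n has a minimal polynomial over F of degree at most n + 1. -/
/-!
The dihedral group acts on `ZMod n` by `r i : x ↦ x + i` and `sr i : x ↦ -(x + i)`, which makes the
`n`-dimensional space `ZMod n →₀ F` a module over the group algebra. As `n` is odd, `2` is
invertible mod `n`, and the elements acting by zero are exactly those with constant coefficient `c`
on the rotations and `-c` on the reflections (`coeff_eq_of_dihedralAlgHom_eq_zero`). Any `τ` acts
on such an element by left multiplication through a single scalar `s`, the value of the sign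
character at `τ` (`exists_mul_eq_smul`). If `p` is the characteristic polynomial of the action of
`τ`, of degree `n`, then `p(τ)` acts by zero by Cayley–Hamilton, so `(X - s) p`, of degree `n + 1`,
annihilates `τ`. No assumption on the characteristic of `F` is needed.
-/

/-- The action of the dihedral group on `ZMod n` by `r i : x ↦ x + i` and `sr i : x ↦ -(x + i)`. -/
def dihedralPoint (n : ℕ) : DihedralGroup n → ZMod n → ZMod n
  | .r i, x => x + i
  | .sr i, x => -(x + i)

/-- The permutation representation of the dihedral group on functions on `ZMod n`. -/
noncomputable def dihedralRep (F : Type*) [Field F] (n : ℕ) :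
    DihedralGroup n →* Module.End F (ZMod n →₀ F) where
  toFun g := Finsupp.lmapDomain F F (dihedralPoint n g)
  map_one' := by
    have h : dihedralPoint n 1 = id := by
      funext x
      rw [DihedralGroup.one_def]
      simp [dihedralPoint]
    rw [h]
    exact Finsupp.lmapDomain_id F F
  map_mul' g h := by
    have hgh : dihedralPoint n (g * h) = dihedralPoint n g ∘ dihedralPoint n h := by
      funext x
      rcases g with i | i <;> rcases h with j | j <;> simp [dihedralPoint] <;> ring
    rw [hgh]
    exact Finsupp.lmapDomain_comp F F _ _

/-- The extension of `dihedralRep` to the group algebra. -/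
noncomputable def dihedralAlgHom (F : Type*) [Field F] (n : ℕ) :
    MonoidAlgebra F (DihedralGroup n) →ₐ[F] Module.End F (ZMod n →₀ F) :=
  MonoidAlgebra.lift F _ _ (dihedralRep F n)

/-- The matrix entries of the permutation representation: exactly one rotation and one reflection
take `j` to `k`. -/
lemma dihedralAlgHom_apply_single (F : Type*) [Field F] (n : ℕ)
    (x : MonoidAlgebra F (DihedralGroup n)) (j k : ZMod n) :
    dihedralAlgHom F n x (Finsupp.single j 1) k
      = x.coeff (.r (k - j)) + x.coeff (.sr (-k - j)) := by
  classical
  induction x using MonoidAlgebra.induction_linear with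
  | zero => simp
  | add x y hx hy =>
    rw [map_add, LinearMap.add_apply, Finsupp.add_apply, hx, hy]
    simp
    ring
  | single g a =>
    have e1 : ∀ i : ZMod n, j + i = k ↔ i = k - j := fun i =>
      ⟨fun h => by rw [← h]; ring, fun h => by rw [h]; ring⟩
    have e2 : ∀ i : ZMod n, -(j + i) = k ↔ i = -k - j := fun i =>
      ⟨fun h => by rw [← h]; ring, fun h => by rw [h]; ring⟩
    rcases g with i | i
    · simp [dihedralAlgHom, MonoidAlgebra.lift_single, dihedralRep, dihedralPoint,
        Finsupp.single_apply, e1]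
    · simp only [dihedralAlgHom, MonoidAlgebra.lift_single, dihedralRep, dihedralPoint,
        MonoidHom.coe_mk, OneHom.coe_mk, LinearMap.smul_apply, Finsupp.lmapDomain_apply,
        Finsupp.mapDomain_single, Finsupp.smul_apply, Finsupp.single_apply, e2]
      simp [Finsupp.single_apply]

lemma coeff_eq_of_dihedralAlgHom_eq_zero (F : Type*) [Field F] (n : ℕ) (hodd : Odd n)
    (x : MonoidAlgebra F (DihedralGroup n)) (hx : dihedralAlgHom F n x = 0) :
    ∃ c : F, ∀ i, x.coeff (.r i) = c ∧ x.coeff (.sr i) = -c := by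
  obtain ⟨m, hm⟩ := hodd
  have h2 : (2 : ZMod n) * (m + 1) = 1 := by
    have h : ((2 * m + 1 : ℕ) : ZMod n) = 0 := by rw [← hm]; simp
    push_cast at h
    linear_combination h
  have key : ∀ i i' : ZMod n, x.coeff (.r i) + x.coeff (.sr i') = 0 := by
    intro i i'
    -- `m + 1` is the inverse of `2`, so `k = (i - i') / 2` and `j = -(i + i') / 2`.
    have h := dihedralAlgHom_apply_single F n x (-(i + i') * (m + 1)) ((i - i') * (m + 1))
    rw [hx] at h
    have e1 : (i - i') * (m + 1) - -(i + i') * (m + 1) = i := by linear_combination i * h2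
    have e2 : -((i - i') * (m + 1)) - -(i + i') * (m + 1) = i' := by linear_combination i' * h2
    rw [e1, e2] at h
    simpa using h.symm
  refine ⟨x.coeff (.r 0), fun i => ⟨?_, ?_⟩⟩
  · linear_combination key i 0 - key 0 0
  · linear_combination key 0 i

/-- The scalar `s` is the value of the sign character at `τ`. -/
lemma exists_mul_eq_smul (F : Type*) [Field F] (n : ℕ)
    (τ : MonoidAlgebra F (DihedralGroup n)) :
    ∃ s : F, ∀ (x : MonoidAlgebra F (DihedralGroup n)) (c : F),
      (∀ i, x.coeff (.r i) = c ∧ x.coeff (.sr i) = -c) → τ * x = s • x := by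
  induction τ using MonoidAlgebra.induction_linear with
  | zero => exact ⟨0, fun x c _ => by simp⟩
  | add y z hy hz =>
    obtain ⟨s, hs⟩ := hy
    obtain ⟨t, ht⟩ := hz
    exact ⟨s + t, fun x c h => by rw [add_mul, add_smul, hs x c h, ht x c h]⟩
  | single g a =>
    rcases g with i | i
    · refine ⟨a, fun x c h => ?_⟩
      ext y
      rcases y with j | j <;> simp [h]
    · refine ⟨-a, fun x c h => ?_⟩
      ext y
      rcases y with j | j <;> simp [h]

theorem stmt_14 (F : Type*) [Field F] (n : ℕ) (hn : 3 ≤ n) (hodd : Odd n)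
    (τ : MonoidAlgebra F (DihedralGroup n)) :
    (minpoly F τ).natDegree ≤ n + 1 := by
  have : NeZero n := ⟨by omega⟩
  obtain ⟨s, hs⟩ := exists_mul_eq_smul F n τ
  set p := (dihedralAlgHom F n τ).charpoly with hp
  have hker : dihedralAlgHom F n (Polynomial.aeval τ p) = 0 := by
    rw [← Polynomial.aeval_algHom_apply, hp, LinearMap.aeval_self_charpoly]
  obtain ⟨c, hc⟩ := coeff_eq_of_dihedralAlgHom_eq_zero F n hodd _ hker
  have hmonic : p.Monic := LinearMap.charpoly_monic _
  have hdeg : p.natDegree = n := by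
    rw [hp, LinearMap.charpoly_natDegree]
    simp
  have hzero : Polynomial.aeval τ ((Polynomial.X - Polynomial.C s) * p) = 0 := by
    rw [map_mul, map_sub, Polynomial.aeval_X, Polynomial.aeval_C, sub_mul, hs _ c hc,
      ← Algebra.smul_def, sub_self]
  have hqmonic := (Polynomial.monic_X_sub_C s).mul hmonic
  calc (minpoly F τ).natDegree ≤ ((Polynomial.X - Polynomial.C s) * p).natDegree :=
        Polynomial.natDegree_le_of_dvd (minpoly.dvd F τ hzero) hqmonic.ne_zero
    _ = n + 1 := by
        rw [(Polynomial.monic_X_sub_C s).natDegree_mul hmonic, Polynomial.natDegree_X_sub_C, hdeg,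
          add_comm]
end

section
/- Let F be an arbitrary field and n ≥ 4 even. Then m(F D_n) ≤ n + 2; that is, every element τ of the group algebra F D_n has a minimal polynomial over F of degree at most n + 2. -/
/-!
Write `R = F[C_n]` for the group algebra of the rotations and `σ` for the involution of `R` induced
by inversion. Every element of `F D_n` is `τ = f + g b` with `f, g ∈ R` and `b` a reflection, and
`b f = σ(f) b`. A direct computation gives the Cayley–Hamilton type identity
`τ² = (f + σ f) τ - (f σ(f) - g σ(g))`, whose coefficients lie in the fixed algebra `S = R^σ`.
Hence all powers of `τ` lie in `S + S τ`. An element of `S` is determined by its coefficients at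
the rotations `0, …, n / 2`, so `dim S ≤ n / 2 + 1` and `dim (S + S τ) ≤ n + 2` when `n` is even.
Since the powers of `τ` below the degree of the minimal polynomial are linearly independent,
that degree is at most `n + 2`.
-/

namespace DihedralMinpoly

open MonoidAlgebra

variable (F : Type*) [Field F] (n : ℕ)

/-- The inclusion of the rotation subgroup, written multiplicatively, into `D_n`. -/
def rotHom : Multiplicative (ZMod n) →* DihedralGroup n where
  toFun i := DihedralGroup.r i.toAdd
  map_one' := rfl
  map_mul' _ _ := rfl

/-- The group algebra `R` of the rotation subgroup. -/
abbrev Rot := MonoidAlgebra F (Multiplicative (ZMod n))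

/-- The embedding `R → F D_n`. -/
noncomputable def rotIncl : Rot F n →ₐ[F] MonoidAlgebra F (DihedralGroup n) :=
  mapDomainAlgHom F F (rotHom n)

/-- The involution `σ` of `R` induced by inversion of rotations. -/
noncomputable def rotInv : Rot F n →ₐ[F] Rot F n :=
  mapDomainAlgHom F F (invMonoidHom : Multiplicative (ZMod n) →* Multiplicative (ZMod n))

/-- The subalgebra `S` of `R` fixed by `σ`. -/
noncomputable def fixedAlg : Subalgebra F (Rot F n) :=
  AlgHom.equalizer (rotInv F n) (AlgHom.id F _)

/-- The reflection `b`. -/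
noncomputable def refl : MonoidAlgebra F (DihedralGroup n) :=
  single (DihedralGroup.sr 0) 1

variable {F n}

lemma mem_fixedAlg {x : Rot F n} : x ∈ fixedAlg F n ↔ rotInv F n x = x := Iff.rfl

lemma rotIncl_single (i : Multiplicative (ZMod n)) (c : F) :
    rotIncl F n (single i c) = single (DihedralGroup.r i.toAdd) c := by
  simp [rotIncl]
  rfl

lemma rotInv_single (i : Multiplicative (ZMod n)) (c : F) :
    rotInv F n (single i c) = single i⁻¹ c := by
  simp [rotInv]

lemma rotInv_rotInv (x : Rot F n) : rotInv F n (rotInv F n x) = x := by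
  induction x using MonoidAlgebra.induction_linear with
  | zero => simp
  | add x y hx hy => simp [hx, hy]
  | single i c => simp [rotInv_single]

lemma coeff_rotInv (x : Rot F n) (i : Multiplicative (ZMod n)) :
    (rotInv F n x).coeff i = x.coeff i⁻¹ := by
  have h := Finsupp.mapDomain_apply (inv_injective (G := Multiplicative (ZMod n))) x.coeff i⁻¹
  rw [inv_inv] at h
  exact h

lemma refl_mul_refl : refl F n * refl F n = 1 := by
  simp [refl, MonoidAlgebra.single_mul_single, MonoidAlgebra.one_def]

lemma refl_mul_rotIncl (x : Rot F n) :
    refl F n * rotIncl F n x = rotIncl F n (rotInv F n x) * refl F n := by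
  induction x using MonoidAlgebra.induction_linear with
  | zero => simp
  | add x y hx hy => simp [hx, hy, mul_add, add_mul]
  | single i c =>
    simp [rotInv_single, rotIncl_single, refl, MonoidAlgebra.single_mul_single]

lemma exists_decomp (τ : MonoidAlgebra F (DihedralGroup n)) :
    ∃ f g : Rot F n, τ = rotIncl F n f + rotIncl F n g * refl F n := by
  induction τ using MonoidAlgebra.induction_linear with
  | zero => exact ⟨0, 0, by simp⟩
  | add x y hx hy =>
    obtain ⟨f, g, rfl⟩ := hx
    obtain ⟨f', g', rfl⟩ := hy
    exact ⟨f + f', g + g', by simp only [map_add, add_mul]; abel⟩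
  | single d c =>
    cases d with
    | r i => exact ⟨single (Multiplicative.ofAdd i) c, 0, by simp [rotIncl_single]⟩
    | sr i =>
      exact ⟨0, single (Multiplicative.ofAdd (-i)) c, by
        simp [rotIncl_single, refl, MonoidAlgebra.single_mul_single]⟩

/-- The quadratic equation over the fixed algebra satisfied by an element of `F D_n`. -/
lemma exists_quadratic (τ : MonoidAlgebra F (DihedralGroup n)) :
    ∃ t ∈ fixedAlg F n, ∃ u ∈ fixedAlg F n,
      τ * τ = rotIncl F n t * τ + rotIncl F n u := by
  obtain ⟨f, g, rfl⟩ := exists_decomp τ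
  refine ⟨f + rotInv F n f, ?_, g * rotInv F n g - f * rotInv F n f, ?_, ?_⟩
  · rw [mem_fixedAlg, map_add, rotInv_rotInv, add_comm]
  · rw [mem_fixedAlg]
    simp only [map_sub, map_mul, rotInv_rotInv]
    ring
  · have h1 : rotIncl F n g * refl F n * rotIncl F n f
        = rotIncl F n (g * rotInv F n f) * refl F n := by
      rw [mul_assoc, refl_mul_rotIncl, ← mul_assoc, ← map_mul]
    have h2 : rotIncl F n g * refl F n * (rotIncl F n g * refl F n)
        = rotIncl F n (g * rotInv F n g) := by
      rw [mul_assoc, ← mul_assoc (refl F n), refl_mul_rotIncl, mul_assoc, refl_mul_refl, mul_one,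
        ← map_mul]
    rw [add_mul, mul_add, mul_add, h1, h2, mul_add, ← mul_assoc, ← mul_assoc, ← map_mul, ← map_mul,
      ← map_mul, ← map_mul]
    have h3 : (f + rotInv F n f) * f = f * f + f * rotInv F n f := by ring
    have h4 : (f + rotInv F n f) * g = f * g + g * rotInv F n f := by ring
    rw [h3, h4]
    simp only [map_add, map_sub, add_mul]
    abel

/-- The linear map `(s, t) ↦ s + t τ`, whose range is `S + S τ`. -/
noncomputable def pairMap (τ : MonoidAlgebra F (DihedralGroup n)) :
    (fixedAlg F n × fixedAlg F n) →ₗ[F] MonoidAlgebra F (DihedralGroup n) :=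
  LinearMap.coprod ((rotIncl F n).toLinearMap ∘ₗ (fixedAlg F n).val.toLinearMap)
    (LinearMap.mulRight F τ ∘ₗ (rotIncl F n).toLinearMap ∘ₗ (fixedAlg F n).val.toLinearMap)

lemma pairMap_apply (τ : MonoidAlgebra F (DihedralGroup n)) (s t : fixedAlg F n) :
    pairMap τ (s, t) = rotIncl F n s + rotIncl F n t * τ := by
  simp [pairMap]

lemma pow_mem_range (τ : MonoidAlgebra F (DihedralGroup n)) (k : ℕ) :
    τ ^ k ∈ LinearMap.range (pairMap τ) := by
  obtain ⟨t, ht, u, hu, h⟩ := exists_quadratic τ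
  induction k with
  | zero => exact ⟨(1, 0), by simp [pairMap_apply]⟩
  | succ k ih =>
    obtain ⟨⟨p, q⟩, hpq⟩ := ih
    refine ⟨(q * ⟨u, hu⟩, p + q * ⟨t, ht⟩), ?_⟩
    rw [pow_succ, ← hpq, pairMap_apply, pairMap_apply, add_mul, mul_assoc, h]
    simp only [Subalgebra.coe_mul, Subalgebra.coe_add, map_add, map_mul, mul_add, add_mul,
      mul_assoc]
    abel

/-- Evaluation of a `σ`-fixed element at the rotations `0, …, n / 2`. -/
noncomputable def coeffMap : fixedAlg F n →ₗ[F] (Fin (n / 2 + 1) → F) where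
  toFun x j := (x : Rot F n).coeff (Multiplicative.ofAdd ((j : ℕ) : ZMod n))
  map_add' _ _ := rfl
  map_smul' _ _ := rfl

lemma coeffMap_injective [NeZero n] : Function.Injective (coeffMap (F := F) (n := n)) := by
  rw [← LinearMap.ker_eq_bot, LinearMap.ker_eq_bot']
  rintro ⟨x, hx⟩ h
  have hsmall : ∀ i : ZMod n, i.val ≤ n / 2 → x.coeff (Multiplicative.ofAdd i) = 0 := by
    intro i hi
    have hc : x.coeff (Multiplicative.ofAdd ((i.val : ℕ) : ZMod n)) = 0 :=
      congrFun h ⟨i.val, by omega⟩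
    rwa [ZMod.natCast_zmod_val] at hc
  ext i
  change x.coeff i = 0
  by_cases hi : (i.toAdd).val ≤ n / 2
  · exact hsmall _ hi
  · have hne : i.toAdd ≠ 0 := by
      rintro h0
      simp [h0] at hi
    have hneg : (-i.toAdd).val ≤ n / 2 := by
      have : NeZero i.toAdd := ⟨hne⟩
      rw [ZMod.val_neg_of_ne_zero]
      omega
    rw [← mem_fixedAlg.1 hx, coeff_rotInv]
    exact hsmall _ hneg

end DihedralMinpoly

open DihedralMinpoly in
theorem stmt_15 (F : Type*) [Field F] (n : ℕ) (hn : 4 ≤ n) (heven : Even n)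
    (τ : MonoidAlgebra F (DihedralGroup n)) :
    (minpoly F τ).natDegree ≤ n + 2 := by
  have : NeZero n := ⟨by omega⟩
  have : Module.Finite F (fixedAlg F n) := Module.Finite.of_injective _ coeffMap_injective
  have hS : Module.finrank F (fixedAlg F n) ≤ n / 2 + 1 := by
    simpa using LinearMap.finrank_le_finrank_of_injective (coeffMap_injective (F := F) (n := n))
  have hV : Module.finrank F (LinearMap.range (pairMap τ)) ≤ n + 2 := by
    refine (LinearMap.finrank_range_le _).trans ?_
    rw [Module.finrank_prod]
    obtain ⟨m, rfl⟩ := heven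
    omega
  have hli : LinearIndependent F (fun i : Fin (minpoly F τ).natDegree =>
      (⟨τ ^ (i : ℕ), pow_mem_range τ i⟩ : LinearMap.range (pairMap τ))) :=
    LinearIndependent.of_comp (LinearMap.range (pairMap τ)).subtype (linearIndependent_pow τ)
  simpa using hli.fintype_card_le_finrank.trans hV
end

section
/- Let F be an arbitrary field and n ≥ 3. Then l(F D_n) ≥ n; that is, there exists a generating set S of the group algebra F D_n of the dihedral group of order 2n with l(S) ≥ n. -/
open MonoidAlgebra in
/-- The two adjacent reflections of `D_n`, as elements of the group algebra. -/
noncomputable def reflS (F : Type*) [Field F] (n : ℕ) : Set (MonoidAlgebra F (DihedralGroup n)) :=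
  {of F _ (DihedralGroup.sr 0), of F _ (DihedralGroup.sr 1)}

/-- The `ℤ`-indexed walk `…, t, 1, s, st, sts, …` around the Cayley graph of `D_n` with respect to
`s = sr 0` and `t = sr 1`. -/
def cyc (n : ℕ) (m : ℤ) : DihedralGroup n :=
  if m % 2 = 0 then DihedralGroup.r ((m / 2 : ℤ) : ZMod n)
  else DihedralGroup.sr (-((m / 2 : ℤ) : ZMod n))

lemma cyc_even (n : ℕ) (j : ℤ) : cyc n (2 * j) = DihedralGroup.r (j : ZMod n) := by
  simp [cyc]

lemma cyc_odd (n : ℕ) (j : ℤ) : cyc n (2 * j + 1) = DihedralGroup.sr (-(j : ZMod n)) := by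
  have h1 : ¬ (2 * j + 1) % 2 = 0 := by omega
  have h2 : (2 * j + 1) / 2 = j := by omega
  rw [cyc, if_neg h1, h2]

lemma cyc_mul_sr_zero (n : ℕ) (m : ℤ) :
    ∃ m' : ℤ, |m'| ≤ |m| + 1 ∧ cyc n m * DihedralGroup.sr 0 = cyc n m' := by
  obtain ⟨j, rfl | rfl⟩ := Int.even_or_odd' m
  · refine ⟨2 * j + 1, by grind, ?_⟩
    rw [cyc_even, cyc_odd]; simp
  · refine ⟨2 * j, by grind, ?_⟩
    rw [cyc_even, cyc_odd]; simp

lemma cyc_mul_sr_one (n : ℕ) (m : ℤ) :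
    ∃ m' : ℤ, |m'| ≤ |m| + 1 ∧ cyc n m * DihedralGroup.sr 1 = cyc n m' := by
  obtain ⟨j, rfl | rfl⟩ := Int.even_or_odd' m
  · refine ⟨2 * (j - 1) + 1, by grind, ?_⟩
    rw [cyc_even, cyc_odd]; simp
  · refine ⟨2 * (j + 1), by grind, ?_⟩
    rw [cyc_even, cyc_odd]; simp [add_comm]

lemma Lk_le_span_cyc (F : Type*) [Field F] (n k : ℕ) :
    Lk F (reflS F n) k ≤ Submodule.span F
      ((fun m : ℤ => MonoidAlgebra.of F _ (cyc n m)) '' Set.Icc (-(k : ℤ)) k) := by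
  induction k with
  | zero =>
    rw [Lk, pow_zero, Submodule.one_eq_span]
    refine Submodule.span_mono ?_
    rintro _ rfl
    refine ⟨0, by simp, ?_⟩
    have : cyc n 0 = 1 := by simpa using cyc_even n 0
    simp only [this, map_one]
  | succ k ih =>
    rw [Lk, pow_succ]
    refine (mul_le_mul_left ih _).trans ?_
    rw [Submodule.span_mul_span]
    refine Submodule.span_mono ?_
    rintro _ ⟨_, ⟨m, hm, rfl⟩, y, hy, rfl⟩
    have hm' : |m| ≤ k := abs_le.2 hm
    rcases hy with rfl | rfl | rfl
    · refine ⟨m, abs_le.1 ?_, by simp⟩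
      push_cast; omega
    · obtain ⟨m', h, e⟩ := cyc_mul_sr_zero n m
      refine ⟨m', abs_le.1 ?_, ?_⟩
      · push_cast; omega
      · simp only [← map_mul, e]
    · obtain ⟨m', h, e⟩ := cyc_mul_sr_one n m
      refine ⟨m', abs_le.1 ?_, ?_⟩
      · push_cast; omega
      · simp only [← map_mul, e]

lemma Lk_refl_eq_top (F : Type*) [Field F] (n : ℕ) [NeZero n] :
    Lk F (reflS F n) (1 + 2 * n) = ⊤ := by
  set V := Submodule.span F ({1} ∪ reflS F n) with hV
  have h1 : (1 : Submodule F (MonoidAlgebra F (DihedralGroup n))) ≤ V := by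
    rw [Submodule.one_le]; exact Submodule.subset_span (by simp)
  have hs0 : MonoidAlgebra.of F _ (DihedralGroup.sr (0 : ZMod n)) ∈ V :=
    Submodule.subset_span (by simp [reflS])
  have hs1 : MonoidAlgebra.of F _ (DihedralGroup.sr (1 : ZMod n)) ∈ V :=
    Submodule.subset_span (by simp [reflS])
  have hr1 : MonoidAlgebra.of F _ (DihedralGroup.r (1 : ZMod n)) ∈ V ^ 2 := by
    have := Submodule.mul_mem_mul hs0 hs1
    rw [← map_mul] at this
    simpa only [pow_two, DihedralGroup.sr_mul_sr, sub_zero] using this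
  have hr (i : ZMod n) : MonoidAlgebra.of F _ (DihedralGroup.r i) ∈ V ^ (2 * n) := by
    have := Submodule.pow_mem_pow _ hr1 i.val
    rw [← map_pow, DihedralGroup.r_one_pow, ZMod.natCast_val, ZMod.cast_id, ← pow_mul] at this
    exact pow_le_pow_right₀ h1 (by have := i.val_lt; omega) this
  have hall (g : DihedralGroup n) : MonoidAlgebra.of F _ g ∈ V ^ (1 + 2 * n) := by
    cases g with
    | r i => exact pow_le_pow_right₀ h1 (by omega) (hr i)
    | sr i =>
      have := Submodule.mul_mem_mul hs0 (hr i)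
      rw [← map_mul] at this
      simpa only [pow_add, pow_one, DihedralGroup.sr_mul_r, zero_add] using this
  rw [Lk, ← hV, eq_top_iff]
  intro x _
  induction x using MonoidAlgebra.induction_on with
  | of g => exact hall g
  | add x y hx hy => exact add_mem (hx trivial) (hy trivial)
  | smul c x hx => exact Submodule.smul_mem _ c (hx trivial)

lemma Lk_le_adjoin (F : Type*) [Field F] {A : Type*} [Ring A] [Algebra F A] (S : Set A) (k : ℕ) :
    Lk F S k ≤ Subalgebra.toSubmodule (Algebra.adjoin F S) := by
  induction k with
  | zero =>
    rw [Lk, pow_zero, Submodule.one_le]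
    exact one_mem (Algebra.adjoin F S)
  | succ k ih =>
    rw [Lk, pow_succ, Submodule.mul_le]
    intro x hx y hy
    refine mul_mem (S := Subalgebra F A) (ih hx) ?_
    refine (Submodule.span_le (p := Subalgebra.toSubmodule (Algebra.adjoin F S))).2 ?_ hy
    rintro z (rfl | hz)
    · exact one_mem (Algebra.adjoin F S)
    · exact Algebra.subset_adjoin hz

lemma le_of_Lk_refl_eq_top (F : Type*) [Field F] (n k : ℕ) [NeZero n]
    (h : Lk F (reflS F n) k = ⊤) : n ≤ k := by
  classical
  have h1 := Lk_le_span_cyc F n k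
  rw [h, top_le_iff, ← Finset.coe_Icc, ← Finset.coe_image] at h1
  have h2 := finrank_span_finset_le_card (R := F)
    ((Finset.Icc (-(k : ℤ)) k).image fun m : ℤ => MonoidAlgebra.of F _ (cyc n m))
  have h3 : Module.finrank F (MonoidAlgebra F (DihedralGroup n)) = 2 * n := by
    rw [Module.finrank_eq_card_basis (MonoidAlgebra.basis (DihedralGroup n) F), DihedralGroup.card]
  have h4 := (Finset.card_image_le (s := Finset.Icc (-(k : ℤ)) k)
    (f := fun m : ℤ => MonoidAlgebra.of F _ (cyc n m)))
  rw [Set.finrank, h1, finrank_top, h3] at h2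
  rw [Int.card_Icc] at h4
  omega

theorem stmt_16 (F : Type*) [Field F] (n : ℕ) (hn : 3 ≤ n) :
    ∃ S : Set (MonoidAlgebra F (DihedralGroup n)),
      Algebra.adjoin F S = ⊤ ∧ n ≤ lenS F S := by
  have : NeZero n := ⟨by omega⟩
  refine ⟨reflS F n, ?_, ?_⟩
  · rw [← Algebra.toSubmodule_eq_top, ← top_le_iff, ← Lk_refl_eq_top F n]
    exact Lk_le_adjoin F _ _
  · exact le_csInf ⟨_, Lk_refl_eq_top F n⟩ fun k hk => le_of_Lk_refl_eq_top F n k hk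
end
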